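/- arXiv:2401.01385 — 2 statements merged into one kernel-verified Lean document; each statement's English description precedes it below -/
import Mathlib

section
/- For any integer s ≥ 1, the series S̄_{4s-1,1}(y) = Σ_{n=1}^∞ (-1)^{n-1} n^{4s-1} / sinh(n y), viewed as a function of x via y = π K'(x)/K(x), lies in z^{4s} ℚ[σ], where z = (2/π)K(x) and σ = x(1-x); i.e., it equals z^{4s} times a polynomial in x(1-x) with rational coefficients. -/
/-- Ascending Pochhammer symbol `(a)_n`. -/
noncomputable def poch (a : ℝ) (n : ℕ) : ℝ := ∏ i ∈ Finset.range n, (a + i)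

/-- Gaussian hypergeometric series `₂F₁(a,b;c;x)`. -/
noncomputable def hypF (a b c x : ℝ) : ℝ :=
  ∑' m : ℕ, poch a m * poch b m / poch c m * x ^ m / m.factorial

/-- Complete elliptic integral of the first kind, `K(x) = (π/2)·₂F₁(1/2,1/2;1;x)`. -/
noncomputable def Kell (x : ℝ) : ℝ := (Real.pi / 2) * hypF (1/2) (1/2) 1 x

/-- `y = π K'/K`. -/
noncomputable def yEll (x : ℝ) : ℝ := Real.pi * Kell (1 - x) / Kell x

/-- `z = (2/π) K`. -/
noncomputable def zEll (x : ℝ) : ℝ := (2 / Real.pi) * Kell x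

/-!
Put `y = π t`. Expanding `1 / sinh` geometrically turns the series with exponent `4 s - 1` into the
lattice sum of `((2m+1) i t + (2n+1)) ^ (-4 s)` over `m, n ∈ ℤ`, that is, into a Taylor coefficient
of `℘` at the half period `1 + i t` of the lattice `2 (ℤ + i t ℤ)`. There `℘' = 0`, and
`℘'' = 6 ℘² - g₂ / 2` expresses all Taylor coefficients through `℘` and `℘''`. The theta
representation of `E₄` gives `144 ℘² = (π z)⁴ (1 - 4 σ)` and `℘'' = -(π z)⁴ σ / 8`. So, counting
`w = (π z)²` and `℘` as having weight one, the derivative of order `2 n` is homogeneous of weight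
`n + 1` over `ℚ[σ]`; in even weight `℘` occurs only through `℘²`, which leaves `w ^ (n + 1) ℚ[σ]`.

That `z = θ₃²` is Jacobi's inversion formula: the doubling formulas for `θ₂` and `θ₃` match Landen's
transformation of `₂F₁(1/2, 1/2; 1; x)`.
-/

open Filter Topology

section PowerSeries

variable {𝕜 : Type*} [RCLike 𝕜] {c : ℕ → 𝕜} {f : 𝕜 → 𝕜} {r : ℝ}

lemma hasFPowerSeriesOnBall_ofScalars_of_hasSum (hr : 0 < r)
    (hf : ∀ y : 𝕜, ‖y‖ < r → HasSum (fun n => c n * y ^ n) (f y)) :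
    HasFPowerSeriesOnBall f (FormalMultilinearSeries.ofScalars 𝕜 c) 0 (ENNReal.ofReal r) where
  r_pos := ENNReal.ofReal_pos.2 hr
  r_le := by
    refine ENNReal.le_of_forall_nnreal_lt fun s hs => ?_
    have hs' : ‖((s : ℝ) : 𝕜)‖ < r := by
      simpa using (ENNReal.lt_ofReal_iff_toReal_lt ENNReal.coe_ne_top).1 hs
    refine FormalMultilinearSeries.le_radius_of_tendsto _ (l := 0) ?_
    simpa [FormalMultilinearSeries.ofScalars_norm] using (hf _ hs').summable.tendsto_atTop_zero.norm
  hasSum {y} hy := by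
    have hy' : ‖y‖ < r := by
      rw [Metric.mem_eball, edist_zero_right, ← ofReal_norm] at hy
      exact (ENNReal.ofReal_lt_ofReal_iff hr).1 hy
    simpa [FormalMultilinearSeries.ofScalars_apply_eq, mul_comm] using hf y hy'

lemma differentiableAt_of_hasSum_pow
    (hf : ∀ y : 𝕜, ‖y‖ < r → HasSum (fun n => c n * y ^ n) (f y)) {x : 𝕜} (hx : ‖x‖ < r) :
    DifferentiableAt 𝕜 f x := by
  have h := hasFPowerSeriesOnBall_ofScalars_of_hasSum ((norm_nonneg x).trans_lt hx) hf
  refine (h.analyticAt_of_mem ?_).differentiableAt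
  rw [Metric.mem_eball, edist_zero_right, ← ofReal_norm]
  exact (ENNReal.ofReal_lt_ofReal_iff_of_nonneg (norm_nonneg x)).2 hx

lemma hasSum_deriv_of_hasSum_pow
    (hf : ∀ y : 𝕜, ‖y‖ < r → HasSum (fun n => c n * y ^ n) (f y)) {x : 𝕜} (hx : ‖x‖ < r) :
    HasSum (fun n : ℕ => (n + 1) * c (n + 1) * x ^ n) (deriv f x) := by
  have h := (hasFPowerSeriesOnBall_ofScalars_of_hasSum ((norm_nonneg x).trans_lt hx) hf).fderiv
  have hmem : x ∈ Metric.eball (0 : 𝕜) (ENNReal.ofReal r) := by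
    rw [Metric.mem_eball, edist_zero_right, ← ofReal_norm]
    exact (ENNReal.ofReal_lt_ofReal_iff_of_nonneg (norm_nonneg x)).2 hx
  have hsum := (h.hasSum hmem).mapL (ContinuousLinearMap.apply 𝕜 𝕜 1)
  simp only [ContinuousLinearMap.apply_apply, zero_add, fderiv_apply_one_eq_deriv] at hsum
  convert! hsum using 2 with n
  rw [FormalMultilinearSeries.apply_eq_pow_smul_coeff, smul_apply,
    FormalMultilinearSeries.derivSeries_coeff_one, FormalMultilinearSeries.coeff_ofScalars,
    nsmul_eq_mul, smul_eq_mul]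
  push_cast
  ring

end PowerSeries

section Hypergeometric

/-- The coefficient of `x ^ n` in `₂F₁(a, b; c; x)`. -/
noncomputable def hypCoeff (a b c : ℝ) (n : ℕ) : ℝ :=
  poch a n * poch b n / poch c n / n.factorial

lemma poch_zero (a : ℝ) : poch a 0 = 1 := Finset.prod_range_zero _

lemma poch_succ (a : ℝ) (n : ℕ) : poch a (n + 1) = poch a n * (a + n) :=
  Finset.prod_range_succ _ _

lemma poch_nonneg {a : ℝ} (ha : 0 ≤ a) (n : ℕ) : 0 ≤ poch a n :=
  Finset.prod_nonneg fun _ _ => by positivity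

lemma hypF_eq_tsum (a b c x : ℝ) : hypF a b c x = ∑' n, hypCoeff a b c n * x ^ n :=
  tsum_congr fun _ => mul_div_right_comm _ _ _

variable {a b c x : ℝ}

lemma hypCoeff_zero (a b c : ℝ) : hypCoeff a b c 0 = 1 := by simp [hypCoeff, poch_zero]

lemma hypCoeff_nonneg (ha : 0 ≤ a) (hb : 0 ≤ b) (hc : 0 ≤ c) (n : ℕ) : 0 ≤ hypCoeff a b c n := by
  have := poch_nonneg ha n
  have := poch_nonneg hb n
  have := poch_nonneg hc n
  unfold hypCoeff
  positivity

lemma hypCoeff_succ (a b c : ℝ) (n : ℕ) :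
    hypCoeff a b c (n + 1) = (a + n) * (b + n) / ((c + n) * (n + 1)) * hypCoeff a b c n := by
  simp only [hypCoeff, poch_succ, Nat.factorial_succ, Nat.cast_mul, Nat.cast_succ, div_eq_mul_inv,
    mul_inv]
  ring

lemma tendsto_hypCoeff_ratio (a b c : ℝ) :
    Tendsto (fun n : ℕ => (a + n) * (b + n) / ((c + n) * (n + 1))) atTop (𝓝 1) := by
  have h (d e : ℝ) : Tendsto (fun n : ℕ => (d + n) / (e + n)) atTop (𝓝 1) := by
    simpa using tendsto_add_mul_div_add_mul_atTop_nhds d e 1 one_ne_zero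
  simpa [mul_div_mul_comm, add_comm _ (1 : ℝ)] using (h a c).mul (h b 1)

lemma summable_hypCoeff_mul_pow (a b c : ℝ) (hx : |x| < 1) :
    Summable fun n => hypCoeff a b c n * x ^ n := by
  obtain ⟨r, hxr, hr⟩ := exists_between hx
  have hlim : Tendsto (fun n : ℕ => ‖(a + n) * (b + n) / ((c + n) * (n + 1))‖ * |x|) atTop
      (𝓝 (‖(1 : ℝ)‖ * |x|)) := (tendsto_hypCoeff_ratio a b c).norm.mul_const _
  refine summable_of_ratio_norm_eventually_le hr ?_
  rw [norm_one, one_mul] at hlim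
  filter_upwards [hlim.eventually_le_const hxr] with n hn
  rw [hypCoeff_succ, pow_succ', mul_mul_mul_comm, norm_mul, norm_mul, Real.norm_eq_abs x]
  exact mul_le_mul_of_nonneg_right hn (norm_nonneg _)

lemma hasSum_hypF (a b c : ℝ) (hx : |x| < 1) :
    HasSum (fun n => hypCoeff a b c n * x ^ n) (hypF a b c x) :=
  hypF_eq_tsum a b c x ▸ (summable_hypCoeff_mul_pow a b c hx).hasSum

lemma hypF_zero (a b c : ℝ) : hypF a b c 0 = 1 := by
  rw [hypF_eq_tsum, tsum_eq_single 0 fun n hn => by simp [hn], hypCoeff_zero, pow_zero, mul_one]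

lemma one_le_hypF (ha : 0 ≤ a) (hb : 0 ≤ b) (hc : 0 ≤ c) (hx₀ : 0 ≤ x) (hx₁ : x < 1) :
    1 ≤ hypF a b c x := by
  have h := hasSum_hypF a b c (abs_lt.2 ⟨by linarith, hx₁⟩)
  simpa [hypCoeff_zero] using le_hasSum h 0 fun n _ =>
    mul_nonneg (hypCoeff_nonneg ha hb hc n) (pow_nonneg hx₀ n)

lemma differentiableAt_hypF (a b c : ℝ) (hx : |x| < 1) : DifferentiableAt ℝ (hypF a b c) x :=
  differentiableAt_of_hasSum_pow (fun _ hy => hasSum_hypF a b c hy) hx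

lemma hasSum_deriv_hypF (a b c : ℝ) (hx : |x| < 1) :
    HasSum (fun n : ℕ => (n + 1) * hypCoeff a b c (n + 1) * x ^ n) (deriv (hypF a b c) x) :=
  hasSum_deriv_of_hasSum_pow (fun _ hy => hasSum_hypF a b c hy) hx

/-- The flux `x (1 - x) F'(x)` in the self-adjoint form `(x (1 - x) F')' = a (1 - a) F` of the
hypergeometric equation satisfied by `F = ₂F₁(a, 1 - a; 1; ·)`. -/
noncomputable def hypFlux (a x : ℝ) : ℝ := x * (1 - x) * deriv (hypF a (1 - a) 1) x

lemma hasSum_hypFlux (a : ℝ) (hx : |x| < 1) :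
    HasSum (fun n : ℕ => (n * hypCoeff a (1 - a) 1 n
      - (n - 1 : ℕ) * hypCoeff a (1 - a) 1 (n - 1)) * x ^ n) (hypFlux a x) := by
  have hθ : HasSum (fun n : ℕ => n * hypCoeff a (1 - a) 1 n * x ^ n)
      (x * deriv (hypF a (1 - a) 1) x) := by
    rw [← hasSum_nat_add_iff' 1]
    convert! (hasSum_deriv_hypF a (1 - a) 1 hx).mul_left x using 1
    · funext n
      push_cast
      ring
    · simp
  rw [← hasSum_nat_add_iff' 1]
  convert! ((hasSum_nat_add_iff' 1).2 hθ).sub (hθ.mul_left x) using 1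
  · funext n
    simp only [Nat.add_sub_cancel]
    ring
  · simp only [hypFlux, Finset.sum_range_one, Nat.cast_zero]
    ring

lemma hasDerivAt_hypFlux (a : ℝ) (hx : |x| < 1) :
    HasDerivAt (hypFlux a) (a * (1 - a) * hypF a (1 - a) 1 x) x := by
  have hG := fun y (hy : ‖y‖ < 1) => hasSum_hypFlux (x := y) a hy
  have hsum := hasSum_deriv_of_hasSum_pow hG hx
  convert! (differentiableAt_of_hasSum_pow hG hx).hasDerivAt using 1
  refine ((hasSum_hypF a (1 - a) 1 hx).mul_left _).unique ?_
  convert! hsum using 2 with n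
  rw [hypCoeff_succ]
  simp only [Nat.add_sub_cancel]
  push_cast
  field_simp
  ring

end Hypergeometric

section SturmLiouville

open Set

variable {f g A B p r : ℝ → ℝ} {a b : ℝ}

lemma eq_left_of_hasDerivAt_zero (hf : ContinuousOn f (Ico a b))
    (hf' : ∀ u ∈ Ioo a b, HasDerivAt f 0 u) {u : ℝ} (hu : u ∈ Ico a b) : f u = f a := by
  rcases hu.1.eq_or_lt with rfl | hau
  · rfl
  obtain ⟨v, -, hv⟩ := exists_hasDerivAt_eq_slope f 0 hau
    (hf.mono (Icc_subset_Ico_right hu.2)) fun v hv => hf' v ⟨hv.1, hv.2.trans hu.2⟩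
  rw [Pi.zero_apply, eq_comm, div_eq_zero_iff, sub_eq_zero] at hv
  exact hv.resolve_right (sub_pos.2 hau).ne'

/-- `f` and `g` solve `(p f')' = r f` with fluxes `A` and `B`; the Wronskian `A g - f B` is
constant. -/
lemma eqOn_of_sturmLiouville (hf : ContinuousOn f (Ico a b)) (hg : ContinuousOn g (Ico a b))
    (hA : ContinuousOn A (Ico a b)) (hB : ContinuousOn B (Ico a b))
    (hf' : ∀ u ∈ Ioo a b, HasDerivAt f (A u / p u) u)
    (hg' : ∀ u ∈ Ioo a b, HasDerivAt g (B u / p u) u)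
    (hA' : ∀ u ∈ Ioo a b, HasDerivAt A (r u * f u) u)
    (hB' : ∀ u ∈ Ioo a b, HasDerivAt B (r u * g u) u)
    (hAa : A a = 0) (hBa : B a = 0) (hfg : f a = g a) (hg₀ : ∀ u ∈ Ico a b, g u ≠ 0) :
    EqOn f g (Ico a b) := by
  have hwronskian : ∀ u ∈ Ico a b, A u * g u - f u * B u = 0 := fun u hu => by
    rw [eq_left_of_hasDerivAt_zero (f := fun u => A u * g u - f u * B u) (by fun_prop) ?_ hu,
      hAa, hBa, zero_mul, mul_zero, sub_zero]
    intro v hv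
    convert! ((hA' v hv).mul (hg' v hv)).sub ((hf' v hv).mul (hB' v hv)) using 1
    ring
  intro u hu
  have hquot : f u / g u = f a / g a := by
    refine eq_left_of_hasDerivAt_zero (hf.div hg hg₀) (fun v hv => ?_) hu
    convert! (hf' v hv).div (hg' v hv) (hg₀ v (Ioo_subset_Ico_self hv)) using 1
    linear_combination (-1 / p v / g v ^ 2) * hwronskian v (Ioo_subset_Ico_self hv)
  have ha : a ∈ Ico a b := ⟨le_rfl, hu.1.trans_lt hu.2⟩
  rw [hfg, div_self (hg₀ a ha)] at hquot
  exact eq_of_div_eq_one hquot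

end SturmLiouville

section Landen

open Set

variable {x u : ℝ}

lemma zEll_eq_hypF : zEll = hypF (1 / 2) (1 - 1 / 2) 1 := by
  funext x
  rw [zEll, Kell, sub_half]
  field_simp

lemma zEll_zero : zEll 0 = 1 := by rw [zEll_eq_hypF, hypF_zero]

lemma zEll_pos (hx₀ : 0 ≤ x) (hx₁ : x < 1) : 0 < zEll x := by
  rw [zEll_eq_hypF]
  exact one_pos.trans_le (one_le_hypF (by norm_num) (by norm_num) one_pos.le hx₀ hx₁)

lemma continuousAt_zEll (hx : |x| < 1) : ContinuousAt zEll x :=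
  zEll_eq_hypF ▸ (differentiableAt_hypF _ _ _ hx).continuousAt

lemma hasDerivAt_zEll (hx₀ : 0 < x) (hx₁ : x < 1) :
    HasDerivAt zEll (hypFlux (1 / 2) x / (x * (1 - x))) x := by
  rw [zEll_eq_hypF, hypFlux, mul_div_cancel_left₀ _ (mul_pos hx₀ (sub_pos.2 hx₁)).ne']
  exact (differentiableAt_hypF _ _ _ (abs_lt.2 ⟨by linarith, hx₁⟩)).hasDerivAt

lemma hasDerivAt_hypFlux_half (hx : |x| < 1) : HasDerivAt (hypFlux (1 / 2)) (zEll x / 4) x := by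
  convert! hasDerivAt_hypFlux (1 / 2) hx using 1
  rw [zEll_eq_hypF]
  ring

lemma hypFlux_zero (a : ℝ) : hypFlux a 0 = 0 := by simp [hypFlux]

/-- The modulus `4u / (1 + u)²` of Landen's transformation. -/
noncomputable def landen (u : ℝ) : ℝ := 4 * u / (1 + u) ^ 2

lemma one_sub_landen (hu : 0 ≤ u) : 1 - landen u = ((1 - u) / (1 + u)) ^ 2 := by
  rw [landen]
  field_simp
  ring

lemma landen_nonneg (hu : 0 ≤ u) : 0 ≤ landen u := by unfold landen; positivity

lemma landen_lt_one (hu₀ : 0 ≤ u) (hu₁ : u < 1) : landen u < 1 := by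
  have : 0 < (1 - u) / (1 + u) := div_pos (sub_pos.2 hu₁) (by positivity)
  rw [← sub_pos, one_sub_landen hu₀]
  positivity

lemma hasDerivAt_landen (hu : 0 ≤ u) :
    HasDerivAt landen (4 * (1 - u) / (1 + u) ^ 3) u := by
  have hne : (1 + u) ^ 2 ≠ 0 := by positivity
  convert! ((hasDerivAt_id u).const_mul 4).div (((hasDerivAt_id u).const_add 1).pow 2) hne using 1
  simp only [id, Pi.pow_apply]
  field_simp
  ring

/-- The flux `p f'` for `p = u (1 - u²)` and `f u = zEll (landen u) / (1 + u)`. -/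
noncomputable def landenFlux (u : ℝ) : ℝ :=
  (1 + u) * hypFlux (1 / 2) (landen u) - u * (1 - u) / (1 + u) * zEll (landen u)

lemma hasDerivAt_zEll_landen (hu₀ : 0 < u) (hu₁ : u < 1) :
    HasDerivAt (fun u => zEll (landen u)) (hypFlux (1 / 2) (landen u) * (1 + u) / (u * (1 - u)))
      u := by
  have h1u : 1 - u ≠ 0 := (sub_pos.2 hu₁).ne'
  have hw : 0 < landen u := by unfold landen; positivity
  convert! (hasDerivAt_zEll hw (landen_lt_one hu₀.le hu₁)).comp u (hasDerivAt_landen hu₀.le) using 1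
  rw [one_sub_landen hu₀.le, landen]
  field_simp

lemma hasDerivAt_landenFlux (hu₀ : 0 < u) (hu₁ : u < 1) :
    HasDerivAt landenFlux (u * (zEll (landen u) / (1 + u))) u := by
  have h1u : 1 - u ≠ 0 := (sub_pos.2 hu₁).ne'
  have hw := abs_lt.2 ⟨by linarith [landen_nonneg hu₀.le], landen_lt_one hu₀.le hu₁⟩
  have hid := hasDerivAt_id u
  have hcoef := (hid.mul (hid.const_sub 1)).div (hid.const_add 1) (by simp only [id]; positivity)
  have hflux := (hasDerivAt_hypFlux_half hw).comp u (hasDerivAt_landen hu₀.le)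
  convert! ((hid.const_add 1).mul hflux).sub (hcoef.mul (hasDerivAt_zEll_landen hu₀ hu₁)) using 1
  simp only [id, Pi.mul_apply, Function.comp_apply, Pi.div_apply]
  field_simp
  ring

lemma hasDerivAt_zEll_landen_div (hu₀ : 0 < u) (hu₁ : u < 1) :
    HasDerivAt (fun u => zEll (landen u) / (1 + u)) (landenFlux u / (u * (1 - u ^ 2))) u := by
  have h1u : 1 - u ≠ 0 := (sub_pos.2 hu₁).ne'
  have hid := hasDerivAt_id u
  convert! (hasDerivAt_zEll_landen hu₀ hu₁).div (hid.const_add 1) (by simp only [id]; positivity)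
    using 1
  rw [landenFlux, show 1 - u ^ 2 = (1 - u) * (1 + u) by ring]
  simp only [id]
  field_simp

lemma hasDerivAt_zEll_sq (hu₀ : 0 < u) (hu₁ : u < 1) :
    HasDerivAt (fun u => zEll (u ^ 2)) (2 * hypFlux (1 / 2) (u ^ 2) / (u * (1 - u ^ 2))) u := by
  have hsq : u ^ 2 < 1 := pow_lt_one₀ hu₀.le hu₁ two_ne_zero
  have h1u : 1 - u ^ 2 ≠ 0 := (sub_pos.2 hsq).ne'
  convert! (hasDerivAt_zEll (by positivity) hsq).comp (h := (· ^ 2)) u (hasDerivAt_pow 2 u) using 1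
  push_cast
  field_simp

lemma hasDerivAt_hypFlux_sq (hu : |u ^ 2| < 1) :
    HasDerivAt (fun u => 2 * hypFlux (1 / 2) (u ^ 2)) (u * zEll (u ^ 2)) u := by
  convert! ((hasDerivAt_hypFlux_half hu).comp (h := (· ^ 2)) u (hasDerivAt_pow 2 u)).const_mul 2
    using 1
  push_cast
  ring

theorem zEll_landen (hu₀ : 0 ≤ u) (hu₁ : u < 1) : zEll (landen u) = (1 + u) * zEll (u ^ 2) := by
  have hsq : ∀ v ∈ Ico (0 : ℝ) 1, |v ^ 2| < 1 := fun v hv => by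
    simpa using pow_lt_one₀ (abs_nonneg v) (abs_lt.2 ⟨by linarith [hv.1], hv.2⟩) two_ne_zero
  have hw : ∀ v ∈ Ico (0 : ℝ) 1, |landen v| < 1 := fun v hv =>
    abs_lt.2 ⟨by linarith [landen_nonneg hv.1], landen_lt_one hv.1 hv.2⟩
  have hne : ∀ v ∈ Ico (0 : ℝ) 1, 1 + v ≠ 0 := fun v hv => by linarith [hv.1]
  have hlanden : ContinuousOn landen (Ico 0 1) := fun v hv =>
    (hasDerivAt_landen hv.1).continuousAt.continuousWithinAt
  have hF : ContinuousOn (fun v => zEll (landen v)) (Ico 0 1) := fun v hv =>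
    (continuousAt_zEll (hw v hv)).comp_continuousWithinAt (hlanden v hv)
  have hG : ContinuousOn (fun v => hypFlux (1 / 2) (landen v)) (Ico 0 1) := fun v hv =>
    (hasDerivAt_hypFlux_half (hw v hv)).continuousAt.comp_continuousWithinAt (hlanden v hv)
  have hflux : ContinuousOn landenFlux (Ico 0 1) := by
    unfold landenFlux
    fun_prop (disch := assumption)
  have h : zEll (landen u) / (1 + u) = zEll (u ^ 2) := eqOn_of_sturmLiouville
    (hF.div (by fun_prop) hne)
    (fun v hv => ContinuousAt.continuousWithinAt
      (ContinuousAt.comp (f := (· ^ 2)) (continuousAt_zEll (hsq v hv)) (by fun_prop)))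
    hflux (fun v hv => (hasDerivAt_hypFlux_sq (hsq v hv)).continuousAt.continuousWithinAt)
    (fun v hv => hasDerivAt_zEll_landen_div hv.1 hv.2) (fun v hv => hasDerivAt_zEll_sq hv.1 hv.2)
    (fun v hv => hasDerivAt_landenFlux hv.1 hv.2)
    (fun v hv => hasDerivAt_hypFlux_sq (hsq v (Ioo_subset_Ico_self hv)))
    (by simp [landenFlux, landen, hypFlux_zero]) (by simp [hypFlux_zero]) (by simp [landen])
    (fun v hv => (zEll_pos (sq_nonneg v) (lt_of_abs_lt (hsq v hv))).ne') ⟨hu₀, hu₁⟩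
  rw [← h, mul_div_cancel₀ _ (hne u ⟨hu₀, hu₁⟩)]

end Landen

section Theta

open Set

variable {𝕜 : Type*} [RCLike 𝕜] {q : 𝕜}

/-- The theta constant `θ₃(q) = ∑ q ^ (n ^ 2)` as a function of the nome;
`θ₄(q)` is written `theta₃ (-q)`. -/
noncomputable def theta₃ (q : 𝕜) : 𝕜 := ∑' n : ℤ, q ^ (n ^ 2)

/-- The theta constant `θ₂` without its prefactor: the usual `θ₂(q)` is `q ^ (1 / 4) * theta₂ q`. -/
noncomputable def theta₂ (q : 𝕜) : 𝕜 := ∑' n : ℤ, q ^ (n * (n + 1))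

lemma norm_zpow_le_pow {r : ℝ} (hq : ‖q‖ ≤ r) (hr : r ≤ 1) {m : ℤ} {k : ℕ} (hkm : (k : ℤ) ≤ m) :
    ‖q ^ m‖ ≤ r ^ k := by
  lift m to ℕ using (Int.natCast_nonneg k).trans hkm
  rw [zpow_natCast, norm_pow]
  exact (pow_le_pow_left₀ (norm_nonneg q) hq m).trans
    (pow_le_pow_of_le_one ((norm_nonneg q).trans hq) hr (Int.ofNat_le.1 hkm))

lemma summable_pow_natAbs_sub_one {r : ℝ} (hr₀ : 0 ≤ r) (hr₁ : r < 1) :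
    Summable fun n : ℤ => r ^ (n.natAbs - 1) := by
  have h := summable_geometric_of_lt_one hr₀ hr₁
  exact .of_nat_of_neg_add_one ((summable_nat_add_iff 1).1 h) (h.congr fun n => by congr 1)

lemma natAbs_sub_one_le_sq (n : ℤ) : ((n.natAbs - 1 : ℕ) : ℤ) ≤ n ^ 2 := by
  rw [← Int.natAbs_sq]
  have : (n.natAbs : ℤ) ≤ (n.natAbs : ℤ) ^ 2 := mod_cast Nat.le_self_pow two_ne_zero _
  lia

lemma natAbs_sub_one_le_mul_succ (n : ℤ) : ((n.natAbs - 1 : ℕ) : ℤ) ≤ n * (n + 1) := by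
  rcases n with n | n
  · simp only [Int.ofNat_eq_natCast, Int.natAbs_natCast]
    have : (0 : ℤ) ≤ n * n := by positivity
    grind
  · simp only [Int.negSucc_eq]
    have : (0 : ℤ) ≤ n * n := by positivity
    grind

lemma summable_norm_theta₃ (hq : ‖q‖ < 1) : Summable fun n : ℤ => ‖q ^ (n ^ 2)‖ :=
  .of_nonneg_of_le (fun _ => norm_nonneg _)
    (fun n => norm_zpow_le_pow le_rfl hq.le (natAbs_sub_one_le_sq n))
    (summable_pow_natAbs_sub_one (norm_nonneg q) hq)

lemma summable_norm_theta₂ (hq : ‖q‖ < 1) : Summable fun n : ℤ => ‖q ^ (n * (n + 1))‖ :=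
  .of_nonneg_of_le (fun _ => norm_nonneg _)
    (fun n => norm_zpow_le_pow le_rfl hq.le (natAbs_sub_one_le_mul_succ n))
    (summable_pow_natAbs_sub_one (norm_nonneg q) hq)

lemma theta₃_zero : theta₃ (0 : 𝕜) = 1 := by
  rw [theta₃, tsum_eq_single 0 fun n hn => zero_zpow _ (pow_ne_zero 2 hn)]
  simp

lemma continuousOn_theta₃ : ContinuousOn (theta₃ : 𝕜 → 𝕜) (Metric.ball 0 1) := by
  intro q hq
  obtain ⟨r, hqr, hr⟩ := exists_between (mem_ball_zero_iff.1 hq)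
  have hball : ContinuousOn (theta₃ : 𝕜 → 𝕜) (Metric.closedBall 0 r) :=
    continuousOn_tsum
      (fun n p _ => (continuousAt_zpow₀ p _ (.inr (sq_nonneg n))).continuousWithinAt)
      (summable_pow_natAbs_sub_one ((norm_nonneg q).trans hqr.le) hr)
      fun n p hp => norm_zpow_le_pow (mem_closedBall_zero_iff.1 hp) hr.le (natAbs_sub_one_le_sq n)
  exact (hball.continuousAt (Metric.closedBall_mem_nhds_of_mem
    (mem_ball_zero_iff.2 hqr))).continuousWithinAt

/-- The change of variables `(m, n) = (k + l, k - l)` or `(k + l + 1, k - l)`, according to the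
parity of `m + n`. -/
def intProdParityEquiv : (ℤ × ℤ) ⊕ (ℤ × ℤ) ≃ ℤ × ℤ where
  toFun := Sum.elim (fun p => (p.1 + p.2, p.1 - p.2)) fun p => (p.1 + p.2 + 1, p.1 - p.2)
  invFun p :=
    if (p.1 + p.2) % 2 = 0 then .inl ((p.1 + p.2) / 2, (p.1 - p.2) / 2)
    else .inr ((p.1 + p.2) / 2, (p.1 - p.2) / 2)
  left_inv := by rintro (⟨k, l⟩ | ⟨k, l⟩) <;> grind
  right_inv := by rintro ⟨m, n⟩; grind

lemma tsum_mul_tsum_eq_parity {f g : ℤ → 𝕜} (hf : Summable fun n => ‖f n‖)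
    (hg : Summable fun n => ‖g n‖) :
    (∑' n, f n) * ∑' n, g n = ∑' p : ℤ × ℤ, f (p.1 + p.2) * g (p.1 - p.2)
      + ∑' p : ℤ × ℤ, f (p.1 + p.2 + 1) * g (p.1 - p.2) := by
  let F := fun p : ℤ × ℤ => f p.1 * g p.2
  have h : Summable (F ∘ intProdParityEquiv) :=
    intProdParityEquiv.summable_iff.2 (summable_mul_of_summable_norm hf hg)
  rw [tsum_mul_tsum_of_summable_norm hf hg, ← intProdParityEquiv.tsum_eq F]
  exact Summable.tsum_sum (f := F ∘ intProdParityEquiv) (h.comp_injective Sum.inl_injective)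
    (h.comp_injective Sum.inr_injective)

lemma norm_sq_lt_one (hq : ‖q‖ < 1) : ‖q ^ 2‖ < 1 := by
  simpa using pow_lt_one₀ (norm_nonneg q) hq two_ne_zero

theorem theta₃_sq (hq₀ : q ≠ 0) (hq₁ : ‖q‖ < 1) :
    theta₃ q ^ 2 = theta₃ (q ^ 2) ^ 2 + q * theta₂ (q ^ 2) ^ 2 := by
  have h₃ := summable_norm_theta₃ (norm_sq_lt_one hq₁)
  have h₂ := summable_norm_theta₂ (norm_sq_lt_one hq₁)
  simp only [theta₃, theta₂, sq (tsum _)]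
  rw [tsum_mul_tsum_eq_parity (summable_norm_theta₃ hq₁) (summable_norm_theta₃ hq₁),
    tsum_mul_tsum_of_summable_norm h₃ h₃, tsum_mul_tsum_of_summable_norm h₂ h₂, ← tsum_mul_left]
  congr 1 <;> refine tsum_congr fun p => ?_ <;>
  · simp only [← zpow_natCast, ← zpow_mul, ← zpow_add₀ hq₀, ← zpow_one_add₀ hq₀]
    congr 1
    push_cast
    ring

theorem theta₂_sq (hq₀ : q ≠ 0) (hq₁ : ‖q‖ < 1) :
    theta₂ q ^ 2 = 2 * (theta₂ (q ^ 2) * theta₃ (q ^ 2)) := by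
  have h₃ := summable_norm_theta₃ (norm_sq_lt_one hq₁)
  have h₂ := summable_norm_theta₂ (norm_sq_lt_one hq₁)
  simp only [theta₃, theta₂, sq (tsum _)]
  rw [tsum_mul_tsum_eq_parity (summable_norm_theta₂ hq₁) (summable_norm_theta₂ hq₁),
    tsum_mul_tsum_of_summable_norm h₂ h₃, two_mul]
  congr 1
  · refine tsum_congr fun p => ?_
    simp only [← zpow_natCast, ← zpow_mul, ← zpow_add₀ hq₀]
    congr 1
    push_cast
    ring
  · let shift := (Equiv.prodComm ℤ ℤ).trans ((Equiv.refl ℤ).prodCongr (Equiv.addRight 1))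
    conv_rhs => rw [← shift.tsum_eq]
    refine tsum_congr fun p => ?_
    simp only [shift, Equiv.trans_apply, Equiv.prodComm_apply, Equiv.prodCongr_apply, Prod.map,
      Prod.swap, Equiv.refl_apply, Equiv.coe_addRight, ← zpow_natCast, ← zpow_mul, ← zpow_add₀ hq₀]
    congr 1
    push_cast
    ring

lemma theta₂_neg (q : 𝕜) : theta₂ (-q) = theta₂ q :=
  tsum_congr fun n => (Int.even_mul_succ_self n).neg_zpow q

theorem theta₃_pow_four (hq : ‖q‖ < 1) :
    theta₃ q ^ 4 = theta₃ (-q) ^ 4 + q * theta₂ q ^ 4 := by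
  rcases eq_or_ne q 0 with rfl | hq₀
  · simp
  have h := theta₃_sq hq₀ hq
  have hneg := theta₃_sq (neg_ne_zero.2 hq₀) (by rwa [norm_neg])
  have h₂ := theta₂_sq hq₀ hq
  rw [neg_sq] at hneg
  linear_combination (theta₃ q ^ 2 + theta₃ (q ^ 2) ^ 2 + q * theta₂ (q ^ 2) ^ 2) * h
    - (theta₃ (-q) ^ 2 + theta₃ (q ^ 2) ^ 2 - q * theta₂ (q ^ 2) ^ 2) * hneg
    - q * (theta₂ q ^ 2 + 2 * (theta₂ (q ^ 2) * theta₃ (q ^ 2))) * h₂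

lemma ofReal_theta₃ (q : ℝ) : ((theta₃ q : ℝ) : ℂ) = theta₃ (q : ℂ) := by
  simp [theta₃, Complex.ofReal_tsum]

lemma ofReal_theta₂ (q : ℝ) : ((theta₂ q : ℝ) : ℂ) = theta₂ (q : ℂ) := by
  simp [theta₂, Complex.ofReal_tsum]

end Theta

section Nome

open Complex

variable {τ : ℂ} {t q : ℝ}

/-- The nome `q = exp (π i τ)`. -/
noncomputable def nome (τ : ℂ) : ℂ := cexp (Real.pi * I * τ)

/-- The nome of `τ = i t` as a real number. -/
noncomputable def realNome (t : ℝ) : ℝ := Real.exp (-(Real.pi * t))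

lemma nome_ne_zero (τ : ℂ) : nome τ ≠ 0 := Complex.exp_ne_zero _

lemma nome_add_one (τ : ℂ) : nome (τ + 1) = -nome τ := by
  rw [nome, nome, mul_add, Complex.exp_add, mul_one, Complex.exp_pi_mul_I, mul_neg_one]

lemma norm_nome (τ : ℂ) : ‖nome τ‖ = realNome τ.im := by
  simp [nome, realNome, Complex.norm_exp]

lemma realNome_pos (t : ℝ) : 0 < realNome t := Real.exp_pos _

lemma realNome_lt_one (ht : 0 < t) : realNome t < 1 :=
  Real.exp_lt_one_iff.2 (neg_neg_of_pos (mul_pos Real.pi_pos ht))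

lemma ofReal_realNome (t : ℝ) : (realNome t : ℂ) = nome (I * t) := by
  rw [nome, realNome, show (Real.pi * I * (I * t) : ℂ) = (I * I) * (Real.pi * t) by ring, I_mul_I]
  push_cast
  ring_nf

lemma exists_realNome_eq (hq₀ : 0 < q) (hq₁ : q < 1) : ∃ t, 0 < t ∧ realNome t = q := by
  refine ⟨-Real.log q / Real.pi, div_pos (neg_pos.2 (Real.log_neg hq₀ hq₁)) Real.pi_pos, ?_⟩
  rw [realNome, mul_div_cancel₀ _ Real.pi_ne_zero, neg_neg, Real.exp_log hq₀]

lemma theta₃_nome (τ : ℂ) : theta₃ (nome τ) = jacobiTheta₂ 0 τ := by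
  refine tsum_congr fun n => ?_
  rw [nome, ← Complex.exp_int_mul, jacobiTheta₂_term]
  congr 1
  push_cast
  ring

lemma theta₃_neg_nome (τ : ℂ) : theta₃ (-nome τ) = jacobiTheta₂ (1 / 2) τ := by
  rw [← nome_add_one]
  refine tsum_congr fun n => ?_
  rw [nome, ← Complex.exp_int_mul, jacobiTheta₂_term, Complex.exp_eq_exp_iff_exists_int]
  obtain ⟨k, hk⟩ := Int.even_mul_pred_self n
  have hk' : (n : ℂ) * (n - 1) = k + k := by exact_mod_cast hk
  refine ⟨k, ?_⟩
  push_cast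
  linear_combination (Real.pi * I) * hk'

lemma theta₂_nome (τ : ℂ) : theta₂ (nome τ) = jacobiTheta₂ (τ / 2) τ := by
  refine tsum_congr fun n => ?_
  rw [nome, ← Complex.exp_int_mul, jacobiTheta₂_term]
  congr 1
  push_cast
  ring

lemma neg_I_mul_cpow_half_pow_four (τ : ℂ) : ((-I * τ) ^ (1 / 2 : ℂ)) ^ 4 = -τ ^ 2 := by
  rw [pow_mul _ 2 2, one_div, Complex.cpow_ofNat_inv_pow, mul_pow, neg_sq, I_sq, neg_one_mul]

theorem theta₃_nome_neg_inv (hτ : τ ≠ 0) :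
    theta₃ (nome (-1 / τ)) ^ 4 = -τ ^ 2 * theta₃ (nome τ) ^ 4 := by
  rw [theta₃_nome, theta₃_nome, jacobiTheta₂_functional_equation 0 τ, mul_pow, mul_pow, div_pow,
    neg_I_mul_cpow_half_pow_four]
  simp [hτ]

theorem theta₂_nome_neg_inv (hτ : τ ≠ 0) :
    nome (-1 / τ) * theta₂ (nome (-1 / τ)) ^ 4 = -τ ^ 2 * theta₃ (-nome τ) ^ 4 := by
  rw [theta₂_nome, theta₃_neg_nome, jacobiTheta₂_functional_equation (1 / 2) τ, mul_pow, mul_pow,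
    div_pow, neg_I_mul_cpow_half_pow_four, ← Complex.exp_nat_mul, nome,
    show (1 / 2 / τ : ℂ) = -(-1 / τ / 2) by field_simp, jacobiTheta₂_neg_left,
    show ((4 : ℕ) : ℂ) * (-Real.pi * I * (1 / 2) ^ 2 / τ) = Real.pi * I * (-1 / τ) by
      push_cast
      ring]
  field_simp

lemma neg_one_div_I_mul (t : ℝ) : (-1 / (I * t) : ℂ) = I * (1 / t : ℝ) := by
  push_cast
  rw [neg_div, one_div, mul_inv, inv_I, neg_mul, neg_neg, one_div]

lemma theta₃_realNome_one_div (ht : 0 < t) :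
    theta₃ (realNome (1 / t)) ^ 4 = t ^ 2 * theta₃ (realNome t) ^ 4 := by
  have h := theta₃_nome_neg_inv (mul_ne_zero I_ne_zero (ofReal_ne_zero.2 ht.ne'))
  rw [neg_one_div_I_mul, ← ofReal_realNome, ← ofReal_realNome, mul_pow, I_sq, neg_one_mul,
    neg_neg, ← ofReal_theta₃, ← ofReal_theta₃] at h
  exact_mod_cast h

lemma theta₂_realNome_one_div (ht : 0 < t) :
    realNome (1 / t) * theta₂ (realNome (1 / t)) ^ 4 = t ^ 2 * theta₃ (-realNome t) ^ 4 := by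
  have h := theta₂_nome_neg_inv (mul_ne_zero I_ne_zero (ofReal_ne_zero.2 ht.ne'))
  rw [neg_one_div_I_mul, ← ofReal_realNome, ← ofReal_realNome, mul_pow, I_sq, neg_one_mul,
    neg_neg, ← ofReal_neg, ← ofReal_theta₃, ← ofReal_theta₂] at h
  exact_mod_cast h

end Nome

section ModularLambda

open Set

variable {q t x : ℝ}

/-- The modular function `λ = θ₂⁴ / θ₃⁴`, the squared elliptic modulus, in terms of the nome. -/
noncomputable def modularLambda (q : ℝ) : ℝ := q * theta₂ q ^ 4 / theta₃ q ^ 4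

lemma norm_lt_one_of_mem (hq₀ : 0 ≤ q) (hq₁ : q < 1) : ‖q‖ < 1 := by
  rwa [Real.norm_of_nonneg hq₀]

lemma one_le_theta₃ (hq₀ : 0 ≤ q) (hq₁ : q < 1) : 1 ≤ theta₃ q := by
  have h := (summable_norm_theta₃ (norm_lt_one_of_mem hq₀ hq₁)).of_norm
  simpa [theta₃] using h.le_tsum 0 fun n _ => by positivity

lemma one_le_theta₂ (hq₀ : 0 ≤ q) (hq₁ : q < 1) : 1 ≤ theta₂ q := by
  have h := (summable_norm_theta₂ (norm_lt_one_of_mem hq₀ hq₁)).of_norm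
  simpa [theta₂] using h.le_tsum 0 fun n _ => by positivity

lemma theta₃_neg_ne_zero (hq₀ : 0 < q) (hq₁ : q < 1) : theta₃ (-q) ≠ 0 := by
  obtain ⟨t, ht, rfl⟩ := exists_realNome_eq hq₀ hq₁
  have hθ := one_le_theta₂ (realNome_pos _).le (realNome_lt_one (one_div_pos.2 ht))
  have hpos : 0 < realNome (1 / t) * theta₂ (realNome (1 / t)) ^ 4 :=
    mul_pos (realNome_pos _) (by positivity)
  rw [theta₂_realNome_one_div ht] at hpos
  exact pow_ne_zero_iff four_ne_zero |>.1 (pos_of_mul_pos_right hpos (sq_nonneg t)).ne'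

lemma one_sub_modularLambda (hq₀ : 0 ≤ q) (hq₁ : q < 1) :
    1 - modularLambda q = theta₃ (-q) ^ 4 / theta₃ q ^ 4 := by
  have := one_le_theta₃ hq₀ hq₁
  rw [modularLambda, one_sub_div (by positivity),
    theta₃_pow_four (norm_lt_one_of_mem hq₀ hq₁), add_sub_cancel_right]

lemma modularLambda_zero : modularLambda 0 = 0 := by simp [modularLambda]

lemma continuousOn_modularLambda : ContinuousOn modularLambda (Ico 0 1) := by
  have hmem : ∀ q ∈ Ico (0 : ℝ) 1, q ∈ Metric.ball (0 : ℝ) 1 := fun q hq =>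
    mem_ball_zero_iff.2 (norm_lt_one_of_mem hq.1 hq.2)
  have hpos : ContinuousOn (fun q : ℝ => theta₃ q) (Ico 0 1) := continuousOn_theta₃.mono hmem
  have hneg : ContinuousOn (fun q : ℝ => theta₃ (-q)) (Ico 0 1) :=
    continuousOn_theta₃.comp continuousOn_neg fun q hq => by simpa using hmem q hq
  have hne : ∀ q ∈ Ico (0 : ℝ) 1, theta₃ q ^ 4 ≠ 0 := fun q hq => by
    have := one_le_theta₃ hq.1 hq.2
    positivity
  refine ContinuousOn.congr (f := fun q => 1 - theta₃ (-q) ^ 4 / theta₃ q ^ 4) ?_ fun q hq => ?_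
  · fun_prop (disch := assumption)
  · linarith [one_sub_modularLambda hq.1 hq.2]

lemma modularLambda_realNome_one_div (ht : 0 < t) :
    modularLambda (realNome (1 / t)) = 1 - modularLambda (realNome t) := by
  rw [one_sub_modularLambda (realNome_pos t).le (realNome_lt_one ht), modularLambda,
    theta₂_realNome_one_div ht, theta₃_realNome_one_div ht]
  field_simp

lemma exists_modularLambda_realNome_eq (hx₀ : 0 < x) (hx₁ : x < 1) :
    ∃ t, 0 < t ∧ modularLambda (realNome t) = x := by
  have hsmall : ∀ᶠ q in 𝓝[>] 0, modularLambda q < 1 - x := by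
    have h := continuousOn_modularLambda 0 (left_mem_Ico.2 one_pos)
    rw [ContinuousWithinAt, modularLambda_zero] at h
    exact (h.mono_left (nhdsWithin_Ioo_eq_nhdsGT (one_pos (α := ℝ)) ▸
      nhdsWithin_mono _ Ioo_subset_Ico_self)).eventually_lt_const (sub_pos.2 hx₁)
  obtain ⟨q', hq', hq'₀, hq'₁⟩ := (hsmall.and (Ioo_mem_nhdsGT one_pos)).exists
  obtain ⟨t', ht', rfl⟩ := exists_realNome_eq hq'₀ hq'₁
  have hlt := realNome_lt_one (one_div_pos.2 ht')
  have hx : x ∈ Icc (modularLambda 0) (modularLambda (realNome (1 / t'))) := by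
    rw [modularLambda_zero, modularLambda_realNome_one_div ht']
    constructor <;> linarith
  obtain ⟨q, hq, rfl⟩ := intermediate_value_Icc (realNome_pos _).le
    (continuousOn_modularLambda.mono (Icc_subset_Ico_right hlt)) hx
  have hq₀ : q ≠ 0 := by
    rintro rfl
    exact hx₀.ne' modularLambda_zero
  obtain ⟨t, ht, rfl⟩ := exists_realNome_eq (hq.1.lt_of_ne' hq₀) (hq.2.trans_lt hlt)
  exact ⟨t, ht, rfl⟩

end ModularLambda

section Inversion

open Set

variable {q t : ℝ}

lemma theta₃_sq_div_zEll_sq (hq₀ : 0 < q) (hq₁ : q < 1) :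
    theta₃ q ^ 2 / zEll (modularLambda q) =
      theta₃ (q ^ 2) ^ 2 / zEll (modularLambda (q ^ 2)) := by
  have hq := norm_lt_one_of_mem hq₀.le hq₁
  have hθ := one_le_theta₃ (sq_nonneg q) (pow_lt_one₀ hq₀.le hq₁ two_ne_zero)
  have hθ_sq := theta₃_sq hq₀.ne' hq
  have hθ_neg_sq := theta₃_sq (neg_ne_zero.2 hq₀.ne') ((norm_neg q).trans_lt hq)
  have hθ_neg := theta₃_neg_ne_zero hq₀ hq₁
  set u := q * theta₂ (q ^ 2) ^ 2 / theta₃ (q ^ 2) ^ 2 with hu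
  have hu₀ : 0 ≤ u := by positivity
  have hu₁ : u < 1 := by
    have : 0 < theta₃ (-q) ^ 2 := by positivity
    rw [hu, div_lt_one (by positivity)]
    rw [neg_sq] at hθ_neg_sq
    linarith
  have hlanden : modularLambda q = landen u := by
    rw [modularLambda, landen, pow_mul _ 2 2, pow_mul _ 2 2, theta₂_sq hq₀.ne' hq, hθ_sq, hu]
    field_simp
    ring
  have hsq : modularLambda (q ^ 2) = u ^ 2 := by
    rw [modularLambda, hu]
    field_simp
  have := zEll_pos (sq_nonneg u) (pow_lt_one₀ hu₀ hu₁ two_ne_zero)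
  rw [hlanden, hsq, zEll_landen hu₀ hu₁, hθ_sq, hu]
  field_simp

theorem theta₃_sq_eq_zEll (hq₀ : 0 < q) (hq₁ : q < 1) : theta₃ q ^ 2 = zEll (modularLambda q) := by
  have hlim : Tendsto (fun n : ℕ => q ^ 2 ^ n) atTop (𝓝[Ico 0 1] 0) :=
    tendsto_nhdsWithin_iff.2 ⟨(tendsto_pow_atTop_nhds_zero_of_lt_one hq₀.le hq₁).comp
      (tendsto_pow_atTop_atTop_of_one_lt one_lt_two),
      .of_forall fun n => ⟨by positivity, pow_lt_one₀ hq₀.le hq₁ (by positivity)⟩⟩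
  have hinv (n : ℕ) : theta₃ (q ^ 2 ^ n) ^ 2 / zEll (modularLambda (q ^ 2 ^ n)) =
      theta₃ q ^ 2 / zEll (modularLambda q) := by
    induction n with
    | zero => simp
    | succ n ih =>
      rw [← ih, theta₃_sq_div_zEll_sq (q := q ^ 2 ^ n) (by positivity)
        (pow_lt_one₀ hq₀.le hq₁ (by positivity)), ← pow_mul, ← pow_succ]
  have hcont : Tendsto (fun q => theta₃ q ^ 2 / zEll (modularLambda q)) (𝓝[Ico 0 1] 0) (𝓝 1) := by
    have hθ : ContinuousWithinAt theta₃ (Ico (0 : ℝ) 1) 0 :=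
      (continuousOn_theta₃ 0 (Metric.mem_ball_self one_pos)).mono fun q hq =>
        mem_ball_zero_iff.2 (norm_lt_one_of_mem hq.1 hq.2)
    have hz : ContinuousWithinAt (fun q => zEll (modularLambda q)) (Ico 0 1) 0 := by
      refine ContinuousAt.comp_continuousWithinAt (g := zEll) (f := modularLambda)
        (continuousAt_zEll ?_) (continuousOn_modularLambda 0 (left_mem_Ico.2 one_pos))
      simp [modularLambda_zero]
    have h : ContinuousWithinAt (fun q => theta₃ q ^ 2 / zEll (modularLambda q)) (Ico 0 1) 0 :=
      (hθ.pow 2).div hz (by simp [modularLambda_zero, zEll_zero])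
    simpa [ContinuousWithinAt, modularLambda_zero, zEll_zero, theta₃_zero] using h
  have h := tendsto_nhds_unique ((hcont.comp hlim).congr hinv) tendsto_const_nhds
  exact eq_of_div_eq_one h.symm

lemma yEll_modularLambda_realNome (ht : 0 < t) :
    yEll (modularLambda (realNome t)) = Real.pi * t := by
  have hpos := one_le_theta₃ (realNome_pos t).le (realNome_lt_one ht)
  have hpos' := one_le_theta₃ (realNome_pos _).le (realNome_lt_one (one_div_pos.2 ht))
  have hθ : theta₃ (realNome (1 / t)) ^ 2 = t * theta₃ (realNome t) ^ 2 := by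
    refine (pow_left_inj₀ (by positivity) (by positivity) two_ne_zero).1 ?_
    linear_combination theta₃_realNome_one_div ht
  have hKell (x : ℝ) : Kell x = Real.pi / 2 * zEll x := by
    rw [zEll]
    field_simp
  rw [yEll, hKell, hKell, ← modularLambda_realNome_one_div ht,
    ← theta₃_sq_eq_zEll (realNome_pos t) (realNome_lt_one ht),
    ← theta₃_sq_eq_zEll (realNome_pos _) (realNome_lt_one (one_div_pos.2 ht)), hθ]
  field_simp

end Inversion

section Eisenstein

open Complex ModularGroup
open UpperHalfPlane hiding I
open scoped MatrixGroups ModularForm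

variable {τ : ℂ}

lemma norm_nome_lt_one (hτ : 0 < τ.im) : ‖nome τ‖ < 1 :=
  (norm_nome τ).trans_lt (realNome_lt_one hτ)

/-- The combination `θ₃⁸ - θ₃⁴ θ₄⁴ + θ₄⁸` of theta constants, a modular form of weight four. -/
noncomputable def thetaFour (τ : ℂ) : ℂ :=
  (theta₃ (nome τ) ^ 4) ^ 2 - theta₃ (nome τ) ^ 4 * theta₃ (-nome τ) ^ 4 +
    (theta₃ (-nome τ) ^ 4) ^ 2

lemma thetaFour_add_one (τ : ℂ) : thetaFour (τ + 1) = thetaFour τ := by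
  rw [thetaFour, thetaFour, nome_add_one, neg_neg]
  ring

lemma thetaFour_neg_inv (hτ : 0 < τ.im) : thetaFour (-τ⁻¹) = τ ^ 4 * thetaFour τ := by
  have hτ₀ : τ ≠ 0 := by
    rintro rfl
    exact hτ.ne rfl
  have him : 0 < (-τ⁻¹).im := by
    rw [← inv_neg]
    exact (UpperHalfPlane.mk τ hτ).im_inv_neg_coe_pos
  have h := theta₃_pow_four (norm_nome_lt_one him)
  have h₃ := theta₃_nome_neg_inv hτ₀
  have h₂ := theta₂_nome_neg_inv hτ₀
  rw [neg_div, one_div] at h₃ h₂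
  have h₄ : theta₃ (-nome (-τ⁻¹)) ^ 4 =
      -τ ^ 2 * (theta₃ (nome τ) ^ 4 - theta₃ (-nome τ) ^ 4) := by
    linear_combination h₃ - h - h₂
  rw [thetaFour, thetaFour, h₃, h₄]
  ring

lemma differentiableAt_thetaFour (hτ : 0 < τ.im) : DifferentiableAt ℂ thetaFour τ := by
  have h₃ := differentiableAt_jacobiTheta₂_snd 0 hτ
  have h₄ := differentiableAt_jacobiTheta₂_snd (1 / 2) hτ
  unfold thetaFour
  simp only [theta₃_nome, theta₃_neg_nome]
  fun_prop

lemma tendsto_nome_atImInfty : Tendsto (fun τ : ℍ => nome τ) atImInfty (𝓝 0) := by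
  refine tendsto_zero_iff_norm_tendsto_zero.2 ?_
  simp only [norm_nome, realNome]
  exact Real.tendsto_exp_neg_atTop_nhds_zero.comp (tendsto_comap.const_mul_atTop Real.pi_pos)

lemma tendsto_thetaFour_atImInfty : Tendsto (fun τ : ℍ => thetaFour τ) atImInfty (𝓝 1) := by
  have hcont : Tendsto theta₃ (𝓝 (0 : ℂ)) (𝓝 1) := by
    have h := continuousOn_theta₃.continuousAt (Metric.ball_mem_nhds (0 : ℂ) one_pos)
    rwa [ContinuousAt, theta₃_zero] at h
  have h₃ := (hcont.comp tendsto_nome_atImInfty).pow 4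
  have h₄ := (hcont.comp (neg_zero (G := ℂ) ▸ tendsto_nome_atImInfty.neg)).pow 4
  simpa [thetaFour] using ((h₃.pow 2).sub (h₃.mul h₄)).add (h₄.pow 2)

lemma thetaFour_slash_S :
    ((fun τ : ℍ => thetaFour τ) ∣[(4 : ℤ)] S) = fun τ : ℍ => thetaFour τ := by
  ext τ
  rw [ModularForm.SL_slash_apply, modular_S_smul, denom_S]
  have hτ := zpow_ne_zero 4 τ.ne_zero
  rw [zpow_neg, ← div_eq_mul_inv, div_eq_iff hτ, mul_comm]
  simpa [inv_neg] using thetaFour_neg_inv τ.im_pos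

lemma thetaFour_slash_T :
    ((fun τ : ℍ => thetaFour τ) ∣[(4 : ℤ)] T) = fun τ : ℍ => thetaFour τ := by
  ext τ
  rw [ModularForm.SL_slash_apply, modular_T_smul]
  simp [denom_apply, coe_T, add_comm (1 : ℂ), thetaFour_add_one]

/-- `thetaFour` as a level one modular form. -/
noncomputable def thetaFourForm : ModularForm 𝒮ℒ 4 where
  toFun τ := thetaFour τ
  slash_action_eq' A hA := by
    obtain ⟨A, rfl⟩ := hA
    exact SlashInvariantForm.slash_action_generators_SL2Z thetaFour_slash_S thetaFour_slash_T A
  holo' := by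
    rw [mdifferentiable_iff]
    refine .congr (f := thetaFour)
      (fun z hz => (differentiableAt_thetaFour hz).differentiableWithinAt) fun z hz => ?_
    simp [ofComplex_apply_of_im_pos hz]
  bdd_at_cusps' hc := by
    rw [Subgroup.IsArithmetic.isCusp_iff_isCusp_SL2Z] at hc
    rw [OnePoint.isBoundedAt_iff_forall_SL2Z hc]
    intro γ _
    rw [SlashInvariantForm.slash_action_generators_SL2Z thetaFour_slash_S thetaFour_slash_T]
    exact tendsto_thetaFour_atImInfty.isBigO_one ℝ

/-- Both sides span the one-dimensional space of weight four forms and equal `1` at `i∞`. -/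
theorem thetaFour_eq_E (τ : ℍ) : thetaFour τ = ModularForm.E (k := 4) (by norm_num) τ := by
  obtain ⟨c, hc⟩ := (finrank_eq_one_iff_of_nonzero' _
    (EisensteinSeries.E_ne_zero (k := 4) (by norm_num) ⟨2, rfl⟩)).1
    (Module.rank_eq_one_iff_finrank_eq_one.1 ModularForm.levelOne_weight_four_rank_one)
    thetaFourForm
  have hcoeff : (qExpansion 1 thetaFourForm).coeff 0 = valueAtInfty thetaFourForm :=
    qExpansion_coeff_zero one_pos
      (ModularFormClass.analyticAt_cuspFunction_zero thetaFourForm one_pos one_mem_strictPeriods_SL)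
      (SlashInvariantFormClass.periodic_comp_ofComplex thetaFourForm one_mem_strictPeriods_SL)
  have hinfty : valueAtInfty thetaFourForm = 1 := tendsto_thetaFour_atImInfty.limUnder_eq
  have hc₁ : c = 1 := by
    rw [hinfty, ← hc, FunLike.coe_smul, ModularForm.qExpansion_smul one_pos
      one_mem_strictPeriods_SL, PowerSeries.coeff_smul,
      EisensteinSeries.E_qExpansion_coeff_zero (k := 4) (by norm_num) ⟨2, rfl⟩] at hcoeff
    simpa using hcoeff
  change thetaFourForm τ = _
  rw [← hc, hc₁, one_smul]

end Eisenstein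

section LatticeSums

open Complex EisensteinSeries
open UpperHalfPlane hiding I
open scoped ArithmeticFunction.sigma Nat

variable {k : ℕ} {τ : ℂ} {t : ℝ}

/-- The Eisenstein series `∑ (m τ + n)⁻ᵏ` over the lattice `ℤ τ + ℤ`; its term at the origin is the
junk value `0⁻¹ = 0`. -/
noncomputable def latticeSum (k : ℕ) (τ : ℂ) : ℂ := ∑' p : ℤ × ℤ, ((p.1 * τ + p.2) ^ k)⁻¹

/-- The part of the Eisenstein series of `ℤ τ + ℤ` carried by pairs of odd coefficients. -/
noncomputable def oddLatticeSum (k : ℕ) (τ : ℂ) : ℂ :=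
  ∑' p : ℤ × ℤ, (((2 * p.1 + 1) * τ + (2 * p.2 + 1)) ^ k)⁻¹

lemma summable_latticeSum (hk : 3 ≤ k) (hτ : 0 < τ.im) :
    Summable fun p : ℤ × ℤ => ((p.1 * τ + p.2) ^ k)⁻¹ :=
  (summable_prod_eisSummand hk ⟨τ, hτ⟩).congr fun p => by simp [eisSummand]

lemma latticeSum_eq_tsum_eisSummand (k : ℕ) (τ : ℍ) :
    latticeSum k τ = ∑' v : Fin 2 → ℤ, eisSummand k v τ := by
  rw [← (finTwoArrowEquiv ℤ).symm.tsum_eq, latticeSum]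
  refine tsum_congr fun p => ?_
  simp [eisSummand]

/-- Splits `ℤ × ℤ` by the parity of the first coordinate, followed by a shear adapted to
`m (τ + 1) / 2 + n`. -/
def intProdShearEquiv : (ℤ × ℤ) ⊕ (ℤ × ℤ) ≃ ℤ × ℤ where
  toFun := Sum.elim (fun p => (2 * p.1, p.2 - p.1)) fun p => (2 * p.1 + 1, p.2 - p.1)
  invFun p := if p.1 % 2 = 0 then .inl (p.1 / 2, p.2 + p.1 / 2) else .inr (p.1 / 2, p.2 + p.1 / 2)
  left_inv := by rintro (⟨k, l⟩ | ⟨k, l⟩) <;> grind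
  right_inv := by rintro ⟨m, n⟩; grind

lemma half_add_one_im_pos (hτ : 0 < τ.im) : 0 < ((τ + 1) / 2).im := by
  simpa using hτ

/-- The lattice spanned by `τ + 1` and `2` consists of the vectors `m τ + n` with `m` and `n` of
the same parity. -/
lemma latticeSum_half_add_one (hk : 3 ≤ k) (hτ : 0 < τ.im) :
    latticeSum k ((τ + 1) / 2) = latticeSum k τ + 2 ^ k * oddLatticeSum k τ := by
  let f := fun p : ℤ × ℤ => ((p.1 * ((τ + 1) / 2) + p.2) ^ k)⁻¹
  have hf : Summable (f ∘ intProdShearEquiv) :=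
    intProdShearEquiv.summable_iff.2 (summable_latticeSum hk (half_add_one_im_pos hτ))
  rw [latticeSum, ← intProdShearEquiv.tsum_eq f, latticeSum, oddLatticeSum, ← tsum_mul_left]
  refine (Summable.tsum_sum (f := f ∘ intProdShearEquiv) (hf.comp_injective Sum.inl_injective)
    (hf.comp_injective Sum.inr_injective)).trans (congrArg₂ _ ?_ ?_)
  · refine tsum_congr fun p => ?_
    simp only [f, Function.comp_apply, intProdShearEquiv, Equiv.coe_fn_mk, Sum.elim_inl]
    push_cast
    ring_nf
  · refine tsum_congr fun p => ?_
    have h : ((2 * p.1 + 1) * τ + (2 * p.2 + 1) : ℂ) =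
        2 * ((2 * p.1 + 1) * ((τ + 1) / 2) + (p.2 - p.1)) := by ring
    rw [h, mul_pow, mul_inv, mul_inv_cancel_left₀ (pow_ne_zero k two_ne_zero)]
    simp [f, intProdShearEquiv]

theorem latticeSum_four (hτ : 0 < τ.im) : latticeSum 4 τ = Real.pi ^ 4 / 45 * thetaFour τ := by
  have hζ : riemannZeta (4 : ℕ) = Real.pi ^ 4 / 90 := by exact_mod_cast riemannZeta_four
  rw [latticeSum_eq_tsum_eisSummand 4 ⟨τ, hτ⟩, thetaFour_eq_E ⟨τ, hτ⟩,
    tsum_eisSummand_eq_riemannZeta_mul_eisensteinSeries (by norm_num), hζ]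
  change _ = _ * ((1 / 2 : ℂ) * eisensteinSeries _ _ _)
  ring!

lemma nome_half_add_one_sq (τ : ℂ) : nome ((τ + 1) / 2) ^ 2 = -nome τ := by
  rw [← nome_add_one, nome, nome, ← Complex.exp_nat_mul]
  push_cast
  ring_nf

theorem oddLatticeSum_four (hτ : 0 < τ.im) :
    oddLatticeSum 4 τ =
      -Real.pi ^ 4 / 48 * (nome τ * theta₂ (nome τ) ^ 4 * theta₃ (-nome τ) ^ 4) := by
  have him := half_add_one_im_pos hτ
  have h := latticeSum_half_add_one (k := 4) (by norm_num) hτ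
  rw [latticeSum_four him, latticeSum_four hτ, thetaFour, thetaFour,
    theta₃_pow_four (norm_nome_lt_one hτ)] at h
  set r := nome ((τ + 1) / 2)
  have hr_sq : r ^ 2 = -nome τ := nome_half_add_one_sq τ
  have hr₀ : r ≠ 0 := nome_ne_zero _
  have hr₁ : ‖r‖ < 1 := norm_nome_lt_one him
  have h₃ := theta₃_sq hr₀ hr₁
  have h₄ := theta₃_sq (neg_ne_zero.2 hr₀) ((norm_neg r).trans_lt hr₁)
  rw [neg_sq, hr_sq, theta₂_neg] at h₄
  rw [hr_sq, theta₂_neg] at h₃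
  rw [pow_mul (theta₃ r) 2 2, h₃, pow_mul (theta₃ (-r)) 2 2, h₄] at h
  linear_combination -(1 / 16) * h + Real.pi ^ 4 / 720 * (14 * theta₃ (-nome τ) ^ 4 *
    theta₂ (nome τ) ^ 4 + theta₂ (nome τ) ^ 8 * (r ^ 2 - nome τ)) * hr_sq

lemma div_one_sub_sq_eq_sub {w : ℂ} (hw : ‖w‖ < 1) :
    w / (1 - w ^ 2) = w / (1 - w) - w ^ 2 / (1 - w ^ 2) := by
  have h₁ : 1 - w ≠ 0 := by
    rintro h
    simp [← sub_eq_zero.1 h] at hw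
  have h₂ : 1 + w ≠ 0 := by
    rintro h
    simp [eq_neg_of_add_eq_zero_right h] at hw
  rw [← one_pow 2, sq_sub_sq, one_pow]
  field_simp
  ring

lemma latticeSum_eq_tsum_geometric (hk : 3 ≤ k) (hk_even : Even k) (hτ : 0 < τ.im) :
    latticeSum k τ = 2 * riemannZeta k + 2 * (2 * Real.pi * I) ^ k / (k - 1)! *
      ∑' n : ℕ+, (n : ℂ) ^ (k - 1) * (nome τ ^ 2) ^ (n : ℕ) / (1 - (nome τ ^ 2) ^ (n : ℕ)) := by
  have hq : cexp (2 * Real.pi * I * τ) = nome τ ^ 2 := by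
    rw [nome, ← Complex.exp_nat_mul]
    push_cast
    ring_nf
  have h := tsum_eisSummand_eq_tsum_sigma_mul_cexp_pow hk hk_even ⟨τ, hτ⟩
  simp only [hq] at h
  rw [latticeSum_eq_tsum_eisSummand k ⟨τ, hτ⟩, h,
    tsum_pow_div_one_sub_eq_tsum_sigma (norm_sq_lt_one (norm_nome_lt_one hτ)), neg_mul, neg_mul,
    hk_even.neg_pow, mul_div_assoc]

lemma oddLatticeSum_eq_tsum (hk : 3 ≤ k) (hk_even : Even k) (hτ : 0 < τ.im) :
    oddLatticeSum k τ = 2 * (Real.pi * I) ^ k / (k - 1)! *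
      ∑' n : ℕ+, (n : ℂ) ^ (k - 1) *
        ((-nome τ) ^ (n : ℕ) / (1 - ((-nome τ) ^ (n : ℕ)) ^ 2)) := by
  have h := latticeSum_half_add_one hk hτ
  rw [latticeSum_eq_tsum_geometric hk hk_even hτ,
    latticeSum_eq_tsum_geometric hk hk_even (half_add_one_im_pos hτ), nome_half_add_one_sq,
    ← neg_sq (nome τ)] at h
  have hp : ‖-nome τ‖ < 1 := (norm_neg _).trans_lt (norm_nome_lt_one hτ)
  have hterm (n : ℕ+) : (n : ℂ) ^ (k - 1) * ((-nome τ) ^ (n : ℕ) / (1 - ((-nome τ) ^ (n : ℕ)) ^ 2))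
      = n ^ (k - 1) * (-nome τ) ^ (n : ℕ) / (1 - (-nome τ) ^ (n : ℕ)) -
        n ^ (k - 1) * ((-nome τ) ^ 2) ^ (n : ℕ) / (1 - ((-nome τ) ^ 2) ^ (n : ℕ)) := by
    have hw : ‖(-nome τ) ^ (n : ℕ)‖ < 1 := by simpa using pow_lt_one₀ (norm_nonneg _) hp n.ne_zero
    rw [pow_right_comm (-nome τ) 2 n, mul_div_assoc, mul_div_assoc, ← mul_sub,
      div_one_sub_sq_eq_sub hw]
  have hsum {r : ℂ} (hr : ‖r‖ < 1) :
      Summable fun n : ℕ+ => (n : ℂ) ^ (k - 1) * r ^ (n : ℕ) / (1 - r ^ (n : ℕ)) :=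
    (summable_norm_pow_mul_geometric_div_one_sub (k - 1) hr).comp_injective PNat.coe_injective
  rw [tsum_congr hterm, (hsum hp).tsum_sub (hsum (norm_sq_lt_one hp))]
  refine mul_left_cancel₀ (pow_ne_zero k (two_ne_zero (α := ℂ))) ?_
  rw [mul_assoc 2, mul_pow 2 _ k] at h
  linear_combination -h

lemma pow_div_one_sub_pow_sq_neg_realNome (t : ℝ) (n : ℕ) :
    (-realNome t) ^ n / (1 - ((-realNome t) ^ n) ^ 2) =
      (-1) ^ n / (2 * Real.sinh (n * (Real.pi * t))) := by
  have hq : realNome t ^ n = Real.exp (-(n * (Real.pi * t))) := by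
    rw [realNome, ← Real.exp_nat_mul, mul_neg]
  rw [neg_pow, mul_pow, ← pow_mul, (even_two.mul_left n).neg_one_pow, one_mul, hq, Real.sinh_eq,
    ← neg_neg (n * (Real.pi * t)), Real.exp_neg (-(n * (Real.pi * t))), neg_neg]
  field_simp

theorem oddLatticeSum_I_mul (hk : 3 ≤ k) (hk_even : Even k) (ht : 0 < t) :
    oddLatticeSum k (I * t) = -(Real.pi * I) ^ k / (k - 1)! *
      (∑' n : ℕ, (-1 : ℝ) ^ n * ((n : ℝ) + 1) ^ (k - 1) /
        Real.sinh (((n : ℝ) + 1) * (Real.pi * t)) : ℝ) := by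
  have hterm (n : ℕ) : ((n + 1 : ℕ) : ℂ) ^ (k - 1) *
      ((-nome (I * t)) ^ (n + 1) / (1 - ((-nome (I * t)) ^ (n + 1)) ^ 2)) =
      -(1 / 2) * ((-1 : ℝ) ^ n * ((n : ℝ) + 1) ^ (k - 1) /
        Real.sinh ((n + 1) * (Real.pi * t)) : ℝ) := by
    rw [← ofReal_realNome]
    have h := congrArg ((↑) : ℝ → ℂ) (pow_div_one_sub_pow_sq_neg_realNome t (n + 1))
    push_cast at h ⊢
    rw [h]
    ring
  rw [oddLatticeSum_eq_tsum hk hk_even (by simpa using ht),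
    tsum_pnat_eq_tsum_succ (f := fun n : ℕ => (n : ℂ) ^ (k - 1) *
      ((-nome (I * t)) ^ n / (1 - ((-nome (I * t)) ^ n) ^ 2))),
    tsum_congr hterm, tsum_mul_left, ← ofReal_tsum]
  ring

end LatticeSums

section WeierstrassP

open PeriodPair
open scoped Nat

variable (L : PeriodPair) {x : ℂ}

lemma iteratedDeriv_weierstrassP (hx : x ∉ L.lattice) {n : ℕ} (hn : n ≠ 0) :
    iteratedDeriv n L.weierstrassP x = (n + 1)! * L.sumInvPow x (n + 2) := by
  have h := L.iteratedDeriv_weierstrassPExcept_self x (n := n)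
  rwa [weierstrassPExcept_of_notMem _ _ hx, if_neg hn] at h

lemma isOpen_compl_lattice : IsOpen (L.latticeᶜ : Set ℂ) := L.isClosed_lattice.isOpen_compl

lemma isPreconnected_compl_lattice : IsPreconnected (L.latticeᶜ : Set ℂ) := by
  have hcount : (L.lattice : Set ℂ).Countable :=
    Set.countable_coe_iff.1 L.latticeEquivProd.injective.countable
  refine (hcount.isPathConnected_compl_of_one_lt_rank ?_).isConnected.isPreconnected
  rw [Complex.rank_real_complex]
  exact Cardinal.one_lt_two

lemma hasDerivAt_weierstrassP (hx : x ∉ L.lattice) :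
    HasDerivAt L.weierstrassP (L.derivWeierstrassP x) x := by
  rw [← L.deriv_weierstrassP]
  exact (L.analyticOnNhd_weierstrassP x hx).differentiableAt.hasDerivAt

lemma exists_derivWeierstrassP_ne_zero : ∃ z ∉ L.lattice, L.derivWeierstrassP z ≠ 0 := by
  by_contra! h
  obtain ⟨c, hc⟩ := (isOpen_compl_lattice L).exists_is_const_of_deriv_eq_zero
    (isPreconnected_compl_lattice L) L.differentiableOn_weierstrassP
    fun z hz => by rw [L.deriv_weierstrassP]; exact h z hz
  have hnear : L.weierstrassP =ᶠ[𝓝[≠] 0] fun _ => c := by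
    filter_upwards [mem_nhdsWithin_of_mem_nhds (L.compl_lattice_sdiff_singleton_mem_nhds 0),
      self_mem_nhdsWithin] with z hz hz₀
    exact hc z fun hmem => hz ⟨hmem, hz₀⟩
  have horder := L.order_weierstrassP 0 L.lattice.zero_mem
  rw [meromorphicOrderAt_congr hnear, meromorphicOrderAt_const] at horder
  split_ifs at horder
  · exact WithTop.top_ne_coe horder
  · exact absurd (WithTop.coe_injective horder) (by norm_num)

/-- Differentiating `℘'² = 4 ℘³ - g₂ ℘ - g₃` gives `℘' (℘'' - 6 ℘² + g₂ / 2) = 0`, and off the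
lattice the analytic functions form a domain. -/
theorem deriv_derivWeierstrassP (hx : x ∉ L.lattice) :
    deriv L.derivWeierstrassP x = 6 * L.weierstrassP x ^ 2 - L.g₂ / 2 := by
  have hmul (z : ℂ) (hz : z ∈ (L.latticeᶜ : Set ℂ)) : L.derivWeierstrassP z *
      (deriv L.derivWeierstrassP z - (6 * L.weierstrassP z ^ 2 - L.g₂ / 2)) = 0 := by
    have h₀ := hasDerivAt_weierstrassP L hz
    have h₁ := (L.analyticOnNhd_derivWeierstrassP z hz).differentiableAt.hasDerivAt
    have heq : (fun z => L.derivWeierstrassP z ^ 2) =ᶠ[𝓝 z]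
        fun z => 4 * L.weierstrassP z ^ 3 - L.g₂ * L.weierstrassP z - L.g₃ := by
      filter_upwards [(isOpen_compl_lattice L).mem_nhds hz] using L.derivWeierstrassP_sq
    have h := ((h₁.pow 2).congr_of_eventuallyEq heq.symm).unique
      ((((h₀.pow 3).const_mul 4).sub (h₀.const_mul L.g₂)).sub_const L.g₃)
    push_cast at h
    linear_combination h / 2
  have han : AnalyticOnNhd ℂ (fun z => deriv L.derivWeierstrassP z -
      (6 * L.weierstrassP z ^ 2 - L.g₂ / 2)) L.latticeᶜ :=
    L.analyticOnNhd_derivWeierstrassP.deriv.sub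
      ((analyticOnNhd_const.mul (L.analyticOnNhd_weierstrassP.pow 2)).sub analyticOnNhd_const)
  have hzero := L.analyticOnNhd_derivWeierstrassP.eq_zero_or_eq_zero_of_mul_eq_zero han hmul
    (isPreconnected_compl_lattice L)
  refine sub_eq_zero.1 (hzero.resolve_left (fun h => ?_) x hx)
  obtain ⟨z, hz, hne⟩ := exists_derivWeierstrassP_ne_zero L
  exact hne (h z hz)

lemma iteratedDeriv_weierstrassP_add_two (hx : x ∉ L.lattice) {n : ℕ} (hn : n ≠ 0) :
    iteratedDeriv (n + 2) L.weierstrassP x = 6 * ∑ a ∈ Finset.range (n + 1), n.choose a *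
      iteratedDeriv a L.weierstrassP x * iteratedDeriv (n - a) L.weierstrassP x := by
  have han := (L.analyticOnNhd_weierstrassP x hx).contDiffAt (n := n)
  have hode : deriv L.derivWeierstrassP =ᶠ[𝓝 x] fun z => 6 * L.weierstrassP z ^ 2 - L.g₂ / 2 := by
    filter_upwards [(isOpen_compl_lattice L).mem_nhds hx] with z hz
    exact deriv_derivWeierstrassP L hz
  have hconst : iteratedDeriv n (fun z => 6 * L.weierstrassP z ^ 2 - L.g₂ / 2) x =
      iteratedDeriv n (fun z => 6 * (L.weierstrassP * L.weierstrassP) z) x := by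
    obtain ⟨m, rfl⟩ := Nat.exists_eq_succ_of_ne_zero hn
    simp only [iteratedDeriv_succ', deriv_sub_const_fun, sq, Pi.mul_apply]
  rw [iteratedDeriv_succ', iteratedDeriv_succ', L.deriv_weierstrassP,
    (hode.iteratedDeriv n).eq_of_nhds, hconst, iteratedDeriv_const_mul_field,
    iteratedDeriv_mul han han]

lemma six_mul_sumInvPow_four (hx : x ∉ L.lattice) :
    6 * L.sumInvPow x 4 = 6 * L.weierstrassP x ^ 2 - L.g₂ / 2 := by
  have h := iteratedDeriv_weierstrassP L hx two_ne_zero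
  rw [iteratedDeriv_succ, iteratedDeriv_one, L.deriv_weierstrassP,
    deriv_derivWeierstrassP L hx] at h
  rw [h]
  norm_num [Nat.factorial]

lemma derivWeierstrassP_eq_zero_of_add_self_mem (hx : x + x ∈ L.lattice) :
    L.derivWeierstrassP x = 0 := by
  have h := L.derivWeierstrassP_add_coe (-x) ⟨x + x, hx⟩
  rw [L.derivWeierstrassP_neg, neg_add_cancel_left] at h
  exact self_eq_neg.1 h

end WeierstrassP

section WeightedRecurrence

open scoped Polynomial
open Polynomial (aeval aeval_algHom_apply)

lemma eq_zero_of_quadratic_recurrence {R : Type*} [Semiring R] {d : ℕ → R}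
    (hd₁ : d 1 = 0)
    (hd : ∀ n ≠ 0, d (n + 2) = 6 * ∑ a ∈ Finset.range (n + 1), n.choose a * d a * d (n - a))
    {n : ℕ} (hn : Odd n) : d n = 0 := by
  induction n using Nat.strong_induction_on with
  | _ n ih =>
    obtain ⟨k, rfl⟩ := hn
    rcases k with _ | k
    · exact hd₁
    rw [show 2 * (k + 1) + 1 = 2 * k + 1 + 2 by ring, hd _ (by lia), Finset.sum_eq_zero, mul_zero]
    intro a ha
    have ha' := Finset.mem_range_succ_iff.1 ha
    rcases Nat.even_or_odd a with h | h
    · rw [ih (2 * k + 1 - a) (by lia) (Nat.Odd.sub_even ha' (odd_two_mul_add_one k) h), mul_zero]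
    · rw [ih a (by lia) h, mul_zero, zero_mul]

variable {A : Type*} [CommRing A] [Algebra ℚ A] {w e σ : A} {E : ℚ[X]} {i j : ℕ}

/-- The `ℚ[σ]`-span of the monomial of weight `m` in `w` and `e` that is at most linear in `e`,
where `w` and `e` both have weight one and `σ` has weight zero. When `e ^ 2 ∈ w ^ 2 ℚ[σ]`, these are
the graded pieces of a ring. -/
noncomputable def weightPiece (w e σ : A) (m : ℕ) : Submodule ℚ A :=
  (LinearMap.mulLeft ℚ (e ^ (m % 2) * w ^ (m - m % 2)) ∘ₗ (aeval σ).toLinearMap).range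

lemma mem_weightPiece {m : ℕ} {a : A} :
    a ∈ weightPiece w e σ m ↔ ∃ P : ℚ[X], e ^ (m % 2) * w ^ (m - m % 2) * aeval σ P = a :=
  Iff.rfl

lemma mem_weightPiece_of_even {m : ℕ} (hm : Even m) {a : A} :
    a ∈ weightPiece w e σ m ↔ ∃ P : ℚ[X], w ^ m * aeval σ P = a := by
  simp [mem_weightPiece, Nat.even_iff.1 hm]

lemma mul_mem_weightPiece (he : e ^ 2 = w ^ 2 * aeval σ E) {a b : A}
    (ha : a ∈ weightPiece w e σ i) (hb : b ∈ weightPiece w e σ j) :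
    a * b ∈ weightPiece w e σ (i + j) := by
  obtain ⟨P, rfl⟩ := mem_weightPiece.1 ha
  obtain ⟨Q, rfl⟩ := mem_weightPiece.1 hb
  rw [mem_weightPiece]
  rcases Nat.even_or_odd' i with ⟨k, rfl | rfl⟩ <;> rcases Nat.even_or_odd' j with ⟨l, rfl | rfl⟩
  · refine ⟨P * Q, ?_⟩
    rw [← mul_add]
    simp only [Nat.mul_mod_right, map_mul, Nat.sub_zero]
    ring
  · refine ⟨P * Q, ?_⟩
    rw [← add_assoc, ← mul_add]
    simp only [Nat.mul_mod_right, Nat.mul_add_mod, map_mul]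
    norm_num
    ring
  · refine ⟨P * Q, ?_⟩
    rw [add_right_comm, ← mul_add]
    simp only [Nat.mul_mod_right, Nat.mul_add_mod, map_mul]
    norm_num
    ring
  · refine ⟨E * P * Q, ?_⟩
    rw [add_add_add_comm, ← mul_add, ← mul_add_one]
    simp only [Nat.mul_mod_right, Nat.mul_add_mod, map_mul]
    norm_num
    linear_combination -w ^ (2 * k + 2 * l) * aeval σ P * aeval σ Q * he

theorem mem_weightPiece_of_quadratic_recurrence {d : ℕ → A}
    (hd₀ : d 0 ^ 2 = w ^ 2 * aeval σ E)
    (hd₁ : d 1 = 0) (hd₂ : d 2 ∈ weightPiece w (d 0) σ 2)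
    (hd : ∀ n ≠ 0, d (n + 2) = 6 * ∑ a ∈ Finset.range (n + 1), n.choose a * d a * d (n - a))
    (n : ℕ) : d (2 * n) ∈ weightPiece w (d 0) σ (n + 1) := by
  induction n using Nat.strong_induction_on with
  | _ n ih =>
    rcases n with _ | _ | n
    · exact mem_weightPiece.2 ⟨1, by simp⟩
    · exact hd₂
    have hsum : ∑ a ∈ Finset.range (2 * n + 2 + 1), (2 * n + 2).choose a * d a * d (2 * n + 2 - a) ∈
        weightPiece w (d 0) σ (n + 2 + 1) := by
      refine Submodule.sum_mem _ fun a ha => ?_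
      have ha' := Finset.mem_range_succ_iff.1 ha
      rw [mul_assoc, ← nsmul_eq_mul]
      refine nsmul_mem ?_ _
      rcases Nat.even_or_odd' a with ⟨i, rfl | rfl⟩
      · have h := mul_mem_weightPiece hd₀ (ih i (by lia)) (ih (n + 1 - i) (by lia))
        rwa [show i + 1 + (n + 1 - i + 1) = n + 2 + 1 by lia,
          show 2 * (n + 1 - i) = 2 * n + 2 - 2 * i by lia] at h
      · rw [eq_zero_of_quadratic_recurrence hd₁ hd (odd_two_mul_add_one i), zero_mul]
        exact zero_mem _
    have h := nsmul_mem hsum 6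
    rwa [nsmul_eq_mul, Nat.cast_ofNat, ← hd _ (by lia)] at h

lemma aeval_apply_eq_aeval {ι : Type*} (σ : ι → A) (P : ℚ[X]) (i : ι) :
    aeval σ P i = aeval (σ i) P :=
  (aeval_algHom_apply (Pi.evalAlgHom ℚ (fun _ : ι => A) i) σ P).symm

theorem exists_polynomial_of_quadratic_recurrence {ι : Type*} {w σ : ι → A} {d : ℕ → ι → A}
    {D : ℚ[X]} (hd₀ : ∀ i, d 0 i ^ 2 = w i ^ 2 * aeval (σ i) E) (hd₁ : ∀ i, d 1 i = 0)
    (hd₂ : ∀ i, d 2 i = w i ^ 2 * aeval (σ i) D)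
    (hd : ∀ n ≠ 0, ∀ i, d (n + 2) i =
      6 * ∑ a ∈ Finset.range (n + 1), n.choose a * d a i * d (n - a) i)
    {n : ℕ} (hn : Odd n) : ∃ P : ℚ[X], ∀ i, d (2 * n) i = w i ^ (n + 1) * aeval (σ i) P := by
  have hmem : d (2 * n) ∈ weightPiece w (d 0) σ (n + 1) := by
    refine mem_weightPiece_of_quadratic_recurrence (E := E) (funext fun i => ?_) (funext hd₁)
      ((mem_weightPiece_of_even even_two).2 ⟨D, funext fun i => ?_⟩)
      (fun m hm => funext fun i => ?_) n
    · simpa [aeval_apply_eq_aeval] using hd₀ i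
    · simpa [aeval_apply_eq_aeval] using (hd₂ i).symm
    · simpa using hd m hm i
  obtain ⟨P, hP⟩ := (mem_weightPiece_of_even hn.add_one).1 hmem
  exact ⟨P, fun i => by simp [← hP, aeval_apply_eq_aeval]⟩

end WeightedRecurrence

section HalfPeriod

open Complex Polynomial
open scoped Nat

variable {t : ℝ}

/-- The rectangular lattice `2 (ℤ + i t ℤ)`, in which `1 + i t` is a half period. -/
noncomputable def rectPeriodPair (t : ℝ) (ht : 0 < t) : PeriodPair where
  ω₁ := 2
  ω₂ := 2 * (I * t)
  indep := by
    refine LinearIndependent.pair_iff.2 fun a b h => ?_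
    exact ⟨by simpa using congrArg re h, by simpa [ht.ne'] using congrArg im h⟩

lemma one_add_I_mul_notMem_lattice (ht : 0 < t) : 1 + I * t ∉ (rectPeriodPair t ht).lattice := by
  have h := PeriodPair.mul_ω₁_add_mul_ω₂_mem_lattice (L := rectPeriodPair t ht) (α := 1 / 2)
    (β := 1 / 2)
  have hhalf : ((1 / 2 : ℚ) : ℂ) * (rectPeriodPair t ht).ω₁ +
      ((1 / 2 : ℚ) : ℂ) * (rectPeriodPair t ht).ω₂ = 1 + I * t := by
    simp [rectPeriodPair]
  rw [hhalf] at h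
  norm_num [h]

lemma one_add_I_mul_add_self_mem_lattice (ht : 0 < t) :
    1 + I * t + (1 + I * t) ∈ (rectPeriodPair t ht).lattice := by
  convert! add_mem (rectPeriodPair t ht).ω₁_mem_lattice (rectPeriodPair t ht).ω₂_mem_lattice using 1
  simp only [rectPeriodPair]
  ring

lemma tsum_rectPeriodPair_lattice (ht : 0 < t) (f : ℂ → ℂ) :
    ∑' l : (rectPeriodPair t ht).lattice, f l = ∑' p : ℤ × ℤ, f (2 * (p.1 * (I * t) + p.2)) := by
  rw [← (rectPeriodPair t ht).latticeEquivProd.symm.toEquiv.tsum_eq,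
    ← (Equiv.prodComm ℤ ℤ).tsum_eq]
  refine tsum_congr fun p => congrArg f ?_
  refine ((rectPeriodPair t ht).latticeEquiv_symm_apply p.swap).trans ?_
  simp only [rectPeriodPair, Prod.fst_swap, Prod.snd_swap]
  ring

lemma sumInvPow_one_add_I_mul (ht : 0 < t) (k : ℕ) :
    (rectPeriodPair t ht).sumInvPow (1 + I * t) k = oddLatticeSum k (I * t) := by
  rw [PeriodPair.sumInvPow, tsum_rectPeriodPair_lattice ht fun z => ((z - (1 + I * t)) ^ k)⁻¹,
    oddLatticeSum, ← ((Equiv.addRight (1 : ℤ)).prodCongr (Equiv.addRight (1 : ℤ))).tsum_eq]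
  refine tsum_congr fun p => congrArg (fun z : ℂ => (z ^ k)⁻¹) ?_
  simp only [Equiv.prodCongr_apply, Equiv.coe_addRight, Prod.map_fst, Prod.map_snd]
  push_cast
  ring

lemma iteratedDeriv_weierstrassP_one_add_I_mul (ht : 0 < t) {n : ℕ} (hn : n ≠ 0) :
    iteratedDeriv n (rectPeriodPair t ht).weierstrassP (1 + I * t) =
      (n + 1)! * oddLatticeSum (n + 2) (I * t) := by
  rw [iteratedDeriv_weierstrassP _ (one_add_I_mul_notMem_lattice ht) hn, sumInvPow_one_add_I_mul]

lemma G_rectPeriodPair (ht : 0 < t) (k : ℕ) :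
    (rectPeriodPair t ht).G k = latticeSum k (I * t) / 2 ^ k := by
  rw [PeriodPair.G, tsum_rectPeriodPair_lattice ht fun z => (z ^ k)⁻¹, latticeSum, ← tsum_div_const]
  refine tsum_congr fun p => ?_
  rw [mul_pow, mul_inv, mul_comm, div_eq_mul_inv]

lemma thetaFour_I_mul (ht : 0 < t) {x : ℝ} (hx : modularLambda (realNome t) = x) :
    thetaFour (I * t) = zEll x ^ 4 * (1 - (x * (1 - x) : ℝ)) := by
  have hq₀ := realNome_pos t
  have hq₁ := realNome_lt_one ht
  have hθ := one_le_theta₃ hq₀.le hq₁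
  have h₄ := one_sub_modularLambda hq₀.le hq₁
  rw [hx, eq_div_iff (by positivity)] at h₄
  have hz := theta₃_sq_eq_zEll hq₀ hq₁
  rw [hx] at hz
  rw [thetaFour, ← ofReal_realNome, ← ofReal_neg, ← ofReal_theta₃, ← ofReal_theta₃]
  norm_cast
  rw [← h₄, ← hz]
  ring

lemma oddLatticeSum_four_I_mul (ht : 0 < t) {x : ℝ} (hx : modularLambda (realNome t) = x) :
    oddLatticeSum 4 (I * t) = -(Real.pi * zEll x) ^ 4 / 48 * (x * (1 - x) : ℝ) := by
  have hq₀ := realNome_pos t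
  have hq₁ := realNome_lt_one ht
  have hθ := one_le_theta₃ hq₀.le hq₁
  have h₄ := one_sub_modularLambda hq₀.le hq₁
  rw [hx, eq_div_iff (by positivity)] at h₄
  have h₂ := hx
  rw [modularLambda, div_eq_iff (by positivity)] at h₂
  have hz := theta₃_sq_eq_zEll hq₀ hq₁
  rw [hx] at hz
  rw [oddLatticeSum_four (by simpa), ← ofReal_realNome, ← ofReal_neg, ← ofReal_theta₃,
    ← ofReal_theta₂]
  norm_cast
  rw [← h₄, h₂, ← hz]
  ring

lemma weierstrassP_one_add_I_mul_sq (ht : 0 < t) {x : ℝ} (hx : modularLambda (realNome t) = x) :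
    (rectPeriodPair t ht).weierstrassP (1 + I * t) ^ 2 =
      (Real.pi * zEll x) ^ 4 * ((1 - 4 * (x * (1 - x) : ℝ)) / 144) := by
  have h := six_mul_sumInvPow_four _ (one_add_I_mul_notMem_lattice ht)
  rw [sumInvPow_one_add_I_mul, oddLatticeSum_four_I_mul ht hx, PeriodPair.g₂, G_rectPeriodPair,
    latticeSum_four (by simpa), thetaFour_I_mul ht hx] at h
  linear_combination -h / 6

theorem exists_polynomial_oddLatticeSum_I_mul {s : ℕ} (hs : s ≠ 0) :
    ∃ P : ℚ[X], ∀ t : ℝ, 0 < t → ∀ x : ℝ, modularLambda (realNome t) = x →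
      (4 * s - 1)! * oddLatticeSum (4 * s) (I * t) =
        ((Real.pi * zEll x) ^ (4 * s) * aeval (x * (1 - x)) P : ℝ) := by
  let lam (t : {t : ℝ // 0 < t}) : ℝ := modularLambda (realNome t)
  obtain ⟨P, hP⟩ := exists_polynomial_of_quadratic_recurrence
    (E := C (1 / 144) * (1 - 4 * X)) (D := C (-1 / 8) * X)
    (w := fun t => ((Real.pi * zEll (lam t)) ^ 2 : ℂ))
    (σ := fun t => (lam t * (1 - lam t) : ℝ))
    (d := fun n t => iteratedDeriv n (rectPeriodPair t t.2).weierstrassP (1 + I * t))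
    (fun t => by
      rw [iteratedDeriv_zero, weierstrassP_one_add_I_mul_sq t.2 rfl]
      simp only [lam, map_mul, map_sub, map_one, map_ofNat, aeval_C, aeval_X, eq_ratCast]
      push_cast
      ring)
    (fun t => by
      rw [iteratedDeriv_one, PeriodPair.deriv_weierstrassP]
      exact derivWeierstrassP_eq_zero_of_add_self_mem _ (one_add_I_mul_add_self_mem_lattice t.2))
    (fun t => by
      rw [iteratedDeriv_weierstrassP_one_add_I_mul t.2 two_ne_zero,
        oddLatticeSum_four_I_mul t.2 rfl]
      simp only [lam, map_mul, aeval_C, aeval_X, eq_ratCast, Nat.factorial]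
      push_cast
      ring)
    (fun n hn t => iteratedDeriv_weierstrassP_add_two _ (one_add_I_mul_notMem_lattice t.2) hn)
    (n := 2 * s - 1) (by grind)
  refine ⟨P, ?_⟩
  rintro t ht _ rfl
  have h := hP ⟨t, ht⟩
  dsimp only at h
  rw [iteratedDeriv_weierstrassP_one_add_I_mul ht (by lia), ← pow_mul,
    show 2 * (2 * s - 1) + 1 = 4 * s - 1 by lia, show 2 * (2 * s - 1) + 2 = 4 * s by lia,
    show 2 * (2 * s - 1 + 1) = 4 * s by lia] at h
  rw [h, ← coe_algebraMap, aeval_algebraMap_apply]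
  simp [lam]

end HalfPeriod

theorem barS_in_z_pow_Qsigma (s : ℕ) (hs : 1 ≤ s) :
    ∃ P : Polynomial ℚ, ∀ x ∈ Set.Ioo (0 : ℝ) 1,
      ∑' n : ℕ, (-1 : ℝ) ^ n * ((n : ℝ) + 1) ^ (4 * s - 1) /
          Real.sinh (((n : ℝ) + 1) * yEll x)
        = zEll x ^ (4 * s) * Polynomial.aeval (x * (1 - x)) P := by
  obtain ⟨P, hP⟩ := exists_polynomial_oddLatticeSum_I_mul (Nat.one_le_iff_ne_zero.1 hs)
  refine ⟨-P, fun x hx => ?_⟩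
  obtain ⟨t, ht, htx⟩ := exists_modularLambda_realNome_eq hx.1 hx.2
  have hy : yEll x = Real.pi * t := htx ▸ yEll_modularLambda_realNome ht
  have hsum := hP t ht x htx
  have hI : (Real.pi * Complex.I) ^ (4 * s) = Real.pi ^ (4 * s) := by
    rw [mul_pow, pow_mul Complex.I, Complex.I_pow_four, one_pow, mul_one]
  rw [oddLatticeSum_I_mul (by lia) ⟨2 * s, by ring⟩ ht, hI, mul_pow] at hsum
  have hpi : (Real.pi : ℂ) ^ (4 * s) ≠ 0 := by simp [Real.pi_ne_zero]
  have hfac : ((4 * s - 1).factorial : ℂ) ≠ 0 := mod_cast (4 * s - 1).factorial_ne_zero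
  rw [hy, map_neg]
  refine Complex.ofReal_injective (mul_left_cancel₀ hpi ?_)
  rw [neg_div, neg_mul, mul_neg, ← mul_assoc, mul_div_cancel₀ _ hfac] at hsum
  push_cast at hsum ⊢
  linear_combination -hsum
end

section
/- ∫₀^∞ x⁹/(cos x - cosh x)² dx = 27·Γ(1/4)^{16}/(5·2^{12}·π⁴) − Γ(1/4)^{24}/(2^{18}·π⁸). -/
/-!
Multiplying out `2 (cosh x - cos x) = eˣ (1 - e^{-(1+i)x}) (1 - e^{-(1-i)x})` expands
`(cos x - cosh x)⁻²` as the double series `4 ∑ m n e^{-((1+i)m + (1-i)n)x}`. Since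
`(1+i)m + (1-i)n = (1-i)(m i + n)`, termwise integration against `x⁹` gives a multiple of
`∑ m n / (m i + n)¹⁰` over the first quadrant, and by invariance under multiplication by `i` this is
a quarter of the sum over all of `ℤ²`. The full sum is a combination of the first and second
derivatives of the Eisenstein series `E₈` at `τ = i`. Ramanujan's differential equations, together
with `E₂(i) = 3 / π` and `E₆(i) = 0`, reduce these to polynomials in `E₄(i)`.

Finally `E₄(i)` is `g₂ / (4π⁴ / 3)` for the lattice `ℤ[i]`, where `g₃ = 0` and
`℘'² = 4℘³ - g₂ ℘`. On the real axis `℘` decreases from `∞` to its minimum at the half-period `1/2`,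
so `1/2 = ∫ dp / √(4p³ - g₂ p)` expresses `g₂` through the beta integral `B(1/4, 1/2)`, that is,
through `Γ(1/4)`.
-/

namespace BerndtIntegral

section LevelOneForms
open UpperHalfPlane ModularForm Filter EisensteinSeries MatrixGroups Derivative
open Function.Periodic (qParam)
open scoped Topology Manifold

theorem tendsto_atImInfty_of_hasSum_qExpansion {h : ℝ} (hh : 0 < h) {f : ℍ → ℂ} {c : ℕ → ℂ}
    (hf : ∀ τ : ℍ, HasSum (fun m ↦ c m • qParam h τ ^ m) (f τ)) :
    Tendsto f atImInfty (𝓝 (c 0)) := by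
  have hq (τ : ℍ) : qParam h τ ≠ 0 := Function.Periodic.qParam_ne_zero _
  have hshift (τ : ℍ) :
      HasSum (fun m ↦ c (m + 1) • qParam h τ ^ m) ((f τ - c 0) / qParam h τ) := by
    have htail := (hasSum_nat_add_iff' 1).mpr (hf τ)
    simp only [Finset.sum_range_one, pow_zero, smul_eq_mul, mul_one] at htail
    refine (htail.div_const (qParam h τ)).congr_fun fun m ↦ ?_
    rw [smul_eq_mul, pow_succ, ← mul_assoc, mul_div_cancel_right₀ _ (hq τ)]
  have hbounded := isBoundedAtImInfty_of_hasSum_qExpansion hh hshift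
  have hzero := (qParam_tendsto_atImInfty hh).zero_mul_isBoundedUnder_le
    hbounded.isBoundedUnder_le
  simpa [mul_div_cancel₀ _ (hq _)] using hzero.add_const (c 0)

theorem tendsto_E_atImInfty {k : ℕ} (hk : 3 ≤ k) (hk2 : Even k) :
    Tendsto (E hk) atImInfty (𝓝 1) := by
  rw [← E_qExpansion_coeff_zero hk hk2]
  exact tendsto_atImInfty_of_hasSum_qExpansion one_pos
    (ModularForm.hasSum_qExpansion (E hk) one_pos one_mem_strictPeriods_SL)

theorem tendsto_E2_atImInfty : Tendsto E2 atImInfty (𝓝 1) := by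
  have h := tendsto_atImInfty_of_hasSum_qExpansion one_pos (f := E2)
    (c := fun m ↦ if m = 0 then 1 else -24 * ArithmeticFunction.sigma 1 m) fun τ ↦ by
      simpa only [qParam, Complex.ofReal_one, div_one] using hasSum_qExpansion_E2 (z := τ)
  rwa [if_pos rfl] at h

theorem half_im_le_im_of_mem_closedBall {z w : ℂ} (hw : w ∈ Metric.closedBall z (z.im / 2)) :
    z.im / 2 ≤ w.im := by
  have habs : |(w - z).im| ≤ z.im / 2 :=
    (Complex.abs_im_le_norm _).trans (by simpa [dist_eq_norm] using hw)
  linarith [(abs_le.mp habs).1, Complex.sub_im w z]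

theorem norm_deriv_comp_ofComplex_le {F : ℍ → ℂ} (hF : MDiff F) {A M : ℝ}
    (hM : ∀ z : ℍ, A ≤ z.im → ‖F z‖ ≤ M) {z : ℍ} (hz : 2 * A ≤ z.im) :
    ‖deriv (F ∘ ofComplex) z‖ ≤ M / (z.im / 2) := by
  have him (w : ℂ) (hw : w ∈ Metric.closedBall (z : ℂ) (z.im / 2)) : z.im / 2 ≤ w.im :=
    half_im_le_im_of_mem_closedBall hw
  have hpos : 0 < z.im / 2 := half_pos z.im_pos
  refine Complex.norm_deriv_le_of_forall_mem_sphere_norm_le hpos ?_ fun w hw ↦ ?_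
  · refine DifferentiableOn.diffContOnCl ((UpperHalfPlane.mdifferentiable_iff.mp hF).mono ?_)
    exact fun w hw ↦ hpos.trans_le (him w (Metric.closure_ball_subset_closedBall hw))
  · have hw' := him w (Metric.sphere_subset_closedBall hw)
    rw [Function.comp_apply, ofComplex_apply_of_im_pos (hpos.trans_le hw')]
    exact hM _ (by rw [mk_im]; linarith)

theorem isZeroAtImInfty_normalizedDerivOfComplex {F : ℍ → ℂ} (hF : MDiff F)
    (hb : IsBoundedAtImInfty F) : IsZeroAtImInfty (D F) := by
  obtain ⟨M, A, hM⟩ := isBoundedAtImInfty_iff.mp hb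
  have him : Tendsto (fun z : ℍ ↦ z.im) atImInfty atTop := tendsto_comap
  have hlim : Tendsto (fun z : ℍ ↦ ‖(2 * Real.pi * Complex.I)⁻¹‖ * (M / (z.im / 2)))
      atImInfty (𝓝 0) := by
    simpa using (tendsto_const_nhds.div_atTop (him.atTop_div_const two_pos)).const_mul _
  refine squeeze_zero_norm' ?_ hlim
  filter_upwards [him.eventually_ge_atTop (2 * A)] with z hz
  rw [normalizedDerivOfComplex, norm_mul]
  gcongr
  exact norm_deriv_comp_ofComplex_le hF hM hz

theorem eq_zero_of_isZeroAtImInfty_of_weight_lt_twelve {k : ℤ} (hk : k < 12) {F : ℍ → ℂ}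
    (hF : MDiff F) (hslash : ∀ γ : SL(2, ℤ), F ∣[k] γ = F) (hzero : IsZeroAtImInfty F) :
    F = 0 := by
  let f : CuspForm 𝒮ℒ k :=
    { toFun := F
      slash_action_eq' := fun _ ⟨γ, hγ⟩ ↦ hγ ▸ hslash γ
      holo' := hF
      zero_at_cusps' := by
        intro c hc
        rw [Subgroup.IsArithmetic.isCusp_iff_isCusp_SL2Z] at hc
        exact (OnePoint.isZeroAt_iff_forall_SL2Z hc).mpr fun γ _ ↦ (hslash γ).symm ▸ hzero }
  have hf : f = 0 := rank_zero_iff_forall_zero.mp (CuspForm.rank_eq_zero_of_weight_lt_twelve hk) f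
  exact congrArg DFunLike.coe hf

theorem mdifferentiable_E {k : ℕ} (hk : 3 ≤ k) : MDiff (E hk : ℍ → ℂ) := (E hk).holo'

theorem E_slash {k : ℕ} (hk : 3 ≤ k) (γ : SL(2, ℤ)) : (E hk : ℍ → ℂ) ∣[(k : ℤ)] γ = E hk :=
  SlashInvariantFormClass.slash_action_eq (E hk) γ ⟨γ, rfl⟩

theorem eq_smul_E_of_tendsto {k : ℕ} (hk : 3 ≤ k) (hk2 : Even k) (hk12 : k < 12) {F : ℍ → ℂ}
    (hF : MDiff F) (hslash : ∀ γ : SL(2, ℤ), F ∣[(k : ℤ)] γ = F) {c : ℂ}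
    (hlim : Tendsto F atImInfty (𝓝 c)) : F = c • ⇑(E hk) := by
  refine sub_eq_zero.mp (eq_zero_of_isZeroAtImInfty_of_weight_lt_twelve (k := k) (mod_cast hk12)
    (hF.sub ((mdifferentiable_E hk).const_smul c)) (fun γ ↦ ?_) ?_)
  · rw [sub_eq_add_neg, SlashAction.add_slash, SlashAction.neg_slash, ModularForm.SL_smul_slash,
      hslash γ, E_slash hk γ]
  · simpa [IsZeroAtImInfty, ZeroAtFilter, Pi.sub_def] using
      hlim.sub ((tendsto_E_atImInfty hk hk2).const_smul c)

end LevelOneForms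

section RamanujanIdentities
open UpperHalfPlane ModularForm Filter EisensteinSeries MatrixGroups Derivative
open scoped Topology Manifold

theorem D_E {k : ℕ} (hk : 3 ≤ k) (hk2 : Even k) (hk12 : k + 2 < 12) (z : ℍ) :
    D (E hk) z = k / 12 * (E2 z * E hk z - E (k := k + 2) (by lia) z) := by
  have hslash (γ : SL(2, ℤ)) :
      serreDerivative k (E hk) ∣[((k + 2 : ℕ) : ℤ)] γ = serreDerivative k (E hk) := by
    simpa using serreDerivative_slash_invariant (mdifferentiable_E hk) (E_slash hk γ)
  have hlim : Tendsto (serreDerivative k (E hk)) atImInfty (𝓝 (0 - k * 12⁻¹ * 1 * 1)) :=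
    (isZeroAtImInfty_normalizedDerivOfComplex (mdifferentiable_E hk)
      (ModularFormClass.bdd_at_infty (E hk))).sub
      ((tendsto_E2_atImInfty.const_mul _).mul (tendsto_E_atImInfty hk hk2))
  have h := congrFun (eq_smul_E_of_tendsto (k := k + 2) (by lia) (by grind) hk12
    (serreDerivative_mdifferentiable _ (mdifferentiable_E hk)) hslash hlim) z
  rw [serreDerivative_apply, Pi.smul_apply, smul_eq_mul] at h
  linear_combination h

theorem hasDerivAt_D2 (γ : SL(2, ℤ)) (z : ℍ) :
    HasDerivAt (D2 γ ∘ ofComplex) (-D2 γ z ^ 2 / (2 * Real.pi * Complex.I)) z := by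
  have hdenom := denom_ne_zero (γ : GL (Fin 2) ℝ) z
  have hderiv := (hasDerivAt_denom_zpow (γ : GL (Fin 2) ℝ) (-1) z).const_mul
    (2 * Real.pi * Complex.I * γ 1 0)
  have heq : D2 γ ∘ ofComplex =ᶠ[𝓝 (z : ℂ)]
      fun w ↦ 2 * Real.pi * Complex.I * γ 1 0 * denom (γ : GL (Fin 2) ℝ) w ^ (-1 : ℤ) := by
    filter_upwards [isOpen_upperHalfPlaneSet.mem_nhds z.im_pos] with w hw
    rw [Function.comp_apply, D2, ofComplex_apply_of_im_pos hw, zpow_neg_one, div_eq_mul_inv]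
  refine (hderiv.congr_of_eventuallyEq heq).congr_deriv ?_
  have h10 : (γ : GL (Fin 2) ℝ) 1 0 = γ 1 0 := by simp
  rw [show D2 γ z = 2 * Real.pi * Complex.I * γ 1 0 / denom γ z from rfl, h10,
    show (-1 - 1 : ℤ) = -2 by norm_num, zpow_neg]
  field_simp
  push_cast
  ring

theorem D_D2 (γ : SL(2, ℤ)) (z : ℍ) : D (D2 γ) z = D2 γ z ^ 2 / (4 * Real.pi ^ 2) := by
  have hI : (2 * Real.pi * Complex.I) ^ 2 = -(4 * Real.pi ^ 2) := by
    rw [mul_pow, Complex.I_sq]; ring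
  rw [normalizedDerivOfComplex, (hasDerivAt_D2 γ z).deriv, neg_div, mul_neg, inv_mul_eq_div,
    div_div, ← sq, hI, div_neg, neg_neg]

theorem mdifferentiable_D2 (γ : SL(2, ℤ)) : MDiff (D2 γ) := fun z ↦
  mdifferentiableAt_iff.mpr (hasDerivAt_D2 γ z).differentiableAt

theorem E2_slash (γ : SL(2, ℤ)) :
    E2 ∣[(2 : ℤ)] γ = E2 - (3 / Real.pi ^ 2 : ℂ) • D2 γ := by
  rw [E2_slash_action, riemannZeta_two]
  congr 2
  field_simp
  norm_num

theorem serreDerivative_one_E2_slash (γ : SL(2, ℤ)) :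
    serreDerivative 1 E2 ∣[(4 : ℤ)] γ = serreDerivative 1 E2 := by
  have hsplit : serreDerivative 1 E2 = serreDerivative 2 E2 + (12⁻¹ : ℂ) • (E2 * E2) := by
    ext z
    simp only [serreDerivative_apply, Pi.add_apply, Pi.smul_apply, Pi.mul_apply, smul_eq_mul]
    ring
  have hserre : serreDerivative 2 E2 ∣[(4 : ℤ)] γ = serreDerivative 2 (E2 ∣[(2 : ℤ)] γ) :=
    serreDerivative_slash_equivariant (k := 2) E2_mdifferentiable
  have hsq : (E2 * E2) ∣[(4 : ℤ)] γ = (E2 ∣[(2 : ℤ)] γ) * (E2 ∣[(2 : ℤ)] γ) :=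
    ModularForm.mul_slash_SL2 2 2 γ E2 E2
  have hsmul := (mdifferentiable_D2 γ).const_smul (3 / Real.pi ^ 2 : ℂ)
  rw [hsplit, SlashAction.add_slash, ModularForm.SL_smul_slash, hserre, hsq, E2_slash]
  ext z
  simp only [serreDerivative_apply, Pi.add_apply, Pi.sub_apply, Pi.smul_apply, Pi.mul_apply,
    smul_eq_mul, normalizedDerivOfComplex_sub _ _ E2_mdifferentiable hsmul,
    normalizedDerivOfComplex_smul _ _ (mdifferentiable_D2 γ), D_D2]
  have hpi : (Real.pi : ℂ) ≠ 0 := mod_cast Real.pi_ne_zero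
  field_simp
  ring

theorem D_E2 (z : ℍ) : D E2 z = 12⁻¹ * (E2 z ^ 2 - E₄ z) := by
  have hlim : Tendsto (serreDerivative 1 E2) atImInfty (𝓝 (0 - 1 * 12⁻¹ * 1 * 1)) :=
    (isZeroAtImInfty_normalizedDerivOfComplex E2_mdifferentiable isBoundedAtImInfty_E2).sub
      ((tendsto_E2_atImInfty.const_mul _).mul tendsto_E2_atImInfty)
  have h := congrFun (eq_smul_E_of_tendsto (k := 4) (by norm_num) (by decide) (by norm_num)
    (serreDerivative_mdifferentiable _ E2_mdifferentiable) serreDerivative_one_E2_slash hlim) z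
  rw [serreDerivative_apply, Pi.smul_apply, smul_eq_mul] at h
  linear_combination h

/-- The normalised level 1 Eisenstein series of weight 8, in the style of Mathlib's `E₄`, `E₆`. -/
noncomputable abbrev E₈ : ModularForm 𝒮ℒ 8 := E (by norm_num : 3 ≤ 8)

theorem E₈_eq_E₄_mul_E₄ : ⇑E₈ = ⇑E₄ * ⇑E₄ := by
  have hE : MDiff ⇑E₄ := E₄.holo'
  have hlim := tendsto_E_atImInfty (k := 4) (by norm_num) (by decide)
  have hslash (γ : SL(2, ℤ)) : (⇑E₄ * ⇑E₄) ∣[((8 : ℕ) : ℤ)] γ = ⇑E₄ * ⇑E₄ := by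
    have hE₄ : ⇑E₄ ∣[(4 : ℤ)] γ = E₄ := E_slash _ γ
    exact (ModularForm.mul_slash_SL2 4 4 γ E₄ E₄).trans (by rw [hE₄])
  have h := eq_smul_E_of_tendsto (k := 8) (by norm_num) (by decide) (by norm_num) (hE.mul hE)
    hslash (hlim.mul hlim)
  rwa [one_mul, one_smul, eq_comm] at h

theorem D_E₄ (z : ℍ) : D E₄ z = 1 / 3 * (E2 z * E₄ z - E₆ z) := by
  rw [D_E (k := 4) (by norm_num) (by decide) (by norm_num)]
  norm_num

theorem D_E₆ (z : ℍ) : D E₆ z = 1 / 2 * (E2 z * E₆ z - E₄ z ^ 2) := by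
  have h8 : E (k := 6 + 2) (by lia) z = E₄ z ^ 2 := (congrFun E₈_eq_E₄_mul_E₄ z).trans (sq _).symm
  rw [D_E (k := 6) (by norm_num) (by decide) (by norm_num), h8]
  norm_num

theorem D_E₈ : D E₈ = (2 / 3 : ℂ) • (E₄ * (E2 * E₄ - E₆) : ℍ → ℂ) := by
  ext z
  have h4 : MDiff ⇑E₄ := E₄.holo'
  simp only [E₈_eq_E₄_mul_E₄, normalizedDerivOfComplex_mul _ _ h4 h4, Pi.add_apply, Pi.mul_apply,
    D_E₄, Pi.smul_apply, Pi.sub_apply, smul_eq_mul]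
  ring

theorem S_smul_I : ModularGroup.S • I = I := by
  ext
  rw [modular_S_smul]
  simp

theorem denom_S_I : denom ModularGroup.S I = Complex.I := by
  rw [ModularGroup.denom_S, coe_I]

theorem E₆_I : E₆ I = 0 := by
  have hslash : ⇑E₆ ∣[(6 : ℤ)] ModularGroup.S = E₆ := E_slash _ _
  have h := congrFun hslash I
  have hI : Complex.I ^ (-(6 : ℤ)) = -1 := by
    rw [show (-(6 : ℤ)) = 2 * (-3) by norm_num, zpow_mul, zpow_ofNat, Complex.I_sq]
    norm_num
  rw [ModularForm.SL_slash_apply, S_smul_I, denom_S_I, hI] at h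
  linear_combination -1 / 2 * h

theorem E2_I : E2 I = 3 / Real.pi := by
  have h := congrFun (E2_slash ModularGroup.S) I
  have hI : Complex.I ^ (-(2 : ℤ)) = -1 := by
    rw [zpow_neg, zpow_ofNat, Complex.I_sq, inv_neg_one]
  rw [ModularForm.SL_slash_apply, S_smul_I, denom_S_I, hI, Pi.sub_apply, Pi.smul_apply, D2_S,
    coe_I, mul_div_cancel_right₀ _ Complex.I_ne_zero, smul_eq_mul] at h
  have hpi : (Real.pi : ℂ) ≠ 0 := mod_cast Real.pi_ne_zero
  field_simp at h ⊢
  linear_combination -1 / 2 * h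

theorem D_E₈_I : D E₈ I = 2 * E₄ I ^ 2 / Real.pi := by
  simp only [D_E₈, Pi.smul_apply, Pi.mul_apply, Pi.sub_apply, E2_I, E₆_I, smul_eq_mul]
  ring

theorem D_D_E₈_I :
    D (D E₈) I = 9 / 2 * E₄ I ^ 2 / Real.pi ^ 2 + 5 / 18 * E₄ I ^ 3 := by
  have h2 := E2_mdifferentiable
  have h4 : MDiff ⇑E₄ := E₄.holo'
  have h6 : MDiff ⇑E₆ := E₆.holo'
  rw [D_E₈, normalizedDerivOfComplex_smul _ _ (h4.mul ((h2.mul h4).sub h6)),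
    normalizedDerivOfComplex_mul _ _ h4 ((h2.mul h4).sub h6),
    normalizedDerivOfComplex_sub _ _ (h2.mul h4) h6, normalizedDerivOfComplex_mul _ _ h2 h4]
  simp only [Pi.add_apply, Pi.mul_apply, Pi.smul_apply, Pi.sub_apply, smul_eq_mul, D_E₄, D_E2,
    D_E₆, E₆_I, E2_I]
  have hpi : (Real.pi : ℂ) ≠ 0 := mod_cast Real.pi_ne_zero
  field_simp
  ring

end RamanujanIdentities

section LatticeSums
open UpperHalfPlane ModularForm EisensteinSeries Derivative
open scoped Topology

/-- The general term `mʲ / (m z + n)ᵏ`, `v = (m, n)`, of the lattice sums that arise on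
differentiating an Eisenstein series with respect to `z`. It vanishes at `v = 0` when `k ≠ 0`. -/
noncomputable def latticeTerm (j k : ℕ) (z : ℂ) (v : Fin 2 → ℤ) : ℂ :=
  (v 0 : ℂ) ^ j / ((v 0 : ℂ) * z + v 1) ^ k

/-- The lattice sum `∑ mʲ / (m z + n)ᵏ` over all `(m, n) ∈ ℤ²`. -/
noncomputable def latticeSum (j k : ℕ) (z : ℂ) : ℂ := ∑' v : Fin 2 → ℤ, latticeTerm j k z v

theorem intCast_mul_add_intCast_ne_zero {v : Fin 2 → ℤ} (hv : v ≠ 0) {z : ℂ} (hz : 0 < z.im) :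
    (v 0 : ℂ) * z + v 1 ≠ 0 := by
  simpa using UpperHalfPlane.linear_ne_zero (cd := fun i ↦ (v i : ℝ)) ⟨z, hz⟩
    fun h ↦ hv (funext fun i ↦ by simpa using congrFun h i)

theorem abs_mul_im_le_norm (v : Fin 2 → ℤ) (τ : ℍ) :
    |(v 0 : ℝ)| * τ.im ≤ ‖(v 0 : ℂ) * τ + v 1‖ := by
  simpa [abs_mul, abs_of_pos τ.im_pos] using Complex.abs_im_le_norm ((v 0 : ℂ) * τ + v 1)

theorem half_norm_le_norm_of_mem_ball (v : Fin 2 → ℤ) {τ : ℍ} {z : ℂ}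
    (hz : z ∈ Metric.ball (τ : ℂ) (τ.im / 2)) :
    ‖(v 0 : ℂ) * τ + v 1‖ / 2 ≤ ‖(v 0 : ℂ) * z + v 1‖ := by
  have hdiff : ‖(v 0 : ℂ) * (z - τ)‖ ≤ |(v 0 : ℝ)| * (τ.im / 2) := by
    rw [norm_mul, Complex.norm_intCast]
    gcongr
    exact (mem_ball_iff_norm.mp hz).le
  have htri := norm_sub_le ((v 0 : ℂ) * z + v 1) ((v 0 : ℂ) * (z - τ))
  rw [show (v 0 : ℂ) * z + v 1 - (v 0 : ℂ) * (z - τ) = (v 0 : ℂ) * τ + v 1 by ring] at htri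
  linarith [abs_mul_im_le_norm v τ]

theorem norm_latticeTerm_le {j k : ℕ} (hjk : j < k) {τ : ℍ} {z : ℂ}
    (hz : z ∈ Metric.ball (τ : ℂ) (τ.im / 2)) (v : Fin 2 → ℤ) :
    ‖latticeTerm j k z v‖ ≤ 2 ^ k / τ.im ^ j * ‖eisSummand (k - j : ℕ) v τ‖ := by
  obtain rfl | hv := eq_or_ne v 0
  · simp only [latticeTerm, Pi.zero_apply, Int.cast_zero, zero_mul, zero_add,
      zero_pow (show k ≠ 0 by lia), div_zero, norm_zero]
    have := τ.im_pos
    positivity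
  set a := ‖(v 0 : ℂ) * τ + v 1‖ with ha
  have ha0 : 0 < a := norm_pos_iff.mpr (intCast_mul_add_intCast_ne_zero hv τ.im_pos)
  have him := τ.im_pos
  have hj : |(v 0 : ℝ)| ≤ a / τ.im := (le_div_iff₀ him).mpr (abs_mul_im_le_norm v τ)
  obtain ⟨l, rfl⟩ := Nat.exists_eq_add_of_le hjk.le
  calc ‖latticeTerm j (j + l) z v‖ = |(v 0 : ℝ)| ^ j / ‖(v 0 : ℂ) * z + v 1‖ ^ (j + l) := by
        rw [latticeTerm, norm_div, norm_pow, norm_pow, Complex.norm_intCast]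
    _ ≤ (a / τ.im) ^ j / (a / 2) ^ (j + l) := by
        gcongr
        exact half_norm_le_norm_of_mem_ball v hz
    _ = 2 ^ (j + l) / τ.im ^ j * ‖eisSummand (j + l - j : ℕ) v τ‖ := by
        rw [eisSummand, norm_zpow, zpow_neg, zpow_natCast, add_tsub_cancel_left, ← ha,
          div_pow, div_pow, pow_add, pow_add]
        field_simp

theorem summable_bound_latticeTerm {j k : ℕ} (hjk : j + 3 ≤ k) (τ : ℍ) :
    Summable fun v ↦ 2 ^ k / τ.im ^ j * ‖eisSummand (k - j : ℕ) v τ‖ :=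
  (summable_norm_eisSummand (by lia) τ).mul_left _

theorem summable_latticeTerm {j k : ℕ} (hjk : j + 3 ≤ k) (τ : ℍ) :
    Summable (latticeTerm j k τ) :=
  .of_norm_bounded (summable_bound_latticeTerm hjk τ)
    (norm_latticeTerm_le (by lia) (Metric.mem_ball_self (half_pos τ.im_pos)))

theorem hasDerivAt_latticeTerm (j : ℕ) {k : ℕ} (hk : k ≠ 0) {z : ℂ} (hz : 0 < z.im)
    (v : Fin 2 → ℤ) :
    HasDerivAt (fun w ↦ latticeTerm j k w v) (-k * latticeTerm (j + 1) (k + 1) z v) z := by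
  obtain rfl | hv := eq_or_ne v 0
  · simpa [latticeTerm, hk] using hasDerivAt_const z (0 : ℂ)
  have hne := intCast_mul_add_intCast_ne_zero hv hz
  have hlin : HasDerivAt (fun w ↦ (v 0 : ℂ) * w + v 1) (v 0 : ℂ) z := by
    simpa using ((hasDerivAt_id z).const_mul (v 0 : ℂ)).add_const (v 1 : ℂ)
  refine (((hlin.fun_pow k).fun_inv (pow_ne_zero k hne)).const_mul ((v 0 : ℂ) ^ j)).congr_deriv ?_
  obtain ⟨l, rfl⟩ := Nat.exists_eq_succ_of_ne_zero hk
  simp only [latticeTerm, Nat.succ_eq_add_one, Nat.add_sub_cancel]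
  field_simp
  ring

theorem hasDerivAt_latticeSum {j k : ℕ} (hjk : j + 3 ≤ k) (τ : ℍ) :
    HasDerivAt (latticeSum j k) (-k * latticeSum (j + 1) (k + 1) τ) τ := by
  set U := Metric.ball (τ : ℂ) (τ.im / 2)
  have hτ : (τ : ℂ) ∈ U := Metric.mem_ball_self (half_pos τ.im_pos)
  have hderiv (z : ℂ) (hz : z ∈ U) (v : Fin 2 → ℤ) :=
    hasDerivAt_latticeTerm j (k := k) (by lia) ((half_pos τ.im_pos).trans_le
      (half_im_le_im_of_mem_closedBall (Metric.ball_subset_closedBall hz))) v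
  have hdiff (v : Fin 2 → ℤ) : DifferentiableOn ℂ (fun z ↦ latticeTerm j k z v) U :=
    fun z hz ↦ (hderiv z hz v).differentiableAt.differentiableWithinAt
  have hbound (v : Fin 2 → ℤ) (z : ℂ) (hz : z ∈ U) := norm_latticeTerm_le (j := j) (k := k)
    (by lia) hz v
  have hsum := summable_bound_latticeTerm hjk τ
  have htsum := Complex.hasSum_deriv_of_summable_norm hsum hdiff Metric.isOpen_ball hbound hτ
  refine ((Complex.differentiableOn_tsum_of_summable_norm hsum hdiff Metric.isOpen_ball
    hbound).differentiableAt (Metric.isOpen_ball.mem_nhds hτ)).hasDerivAt.congr_deriv ?_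
  rw [← htsum.tsum_eq, latticeSum, ← tsum_mul_left]
  exact tsum_congr fun v ↦ (hderiv τ hτ v).deriv

theorem D_const_mul_latticeSum {j k : ℕ} (hjk : j + 3 ≤ k) (c : ℂ) :
    D (fun τ : ℍ ↦ c * latticeSum j k τ) =
      fun τ : ℍ ↦ -k * c / (2 * Real.pi * Complex.I) * latticeSum (j + 1) (k + 1) τ := by
  ext τ
  have heq : (fun τ : ℍ ↦ c * latticeSum j k τ) ∘ ofComplex =ᶠ[𝓝 (τ : ℂ)]
      fun w ↦ c * latticeSum j k w := by
    filter_upwards [isOpen_upperHalfPlaneSet.mem_nhds τ.im_pos] with w hw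
    rw [Function.comp_apply, ofComplex_apply_of_im_pos hw]
  rw [normalizedDerivOfComplex, (((hasDerivAt_latticeSum hjk τ).const_mul
    c).congr_of_eventuallyEq heq).deriv]
  ring

theorem latticeSum_zero {k : ℕ} (hk : 3 ≤ k) (τ : ℍ) :
    latticeSum 0 k τ = 2 * riemannZeta k * E hk τ := by
  have hterm (v : Fin 2 → ℤ) : latticeTerm 0 k τ v = eisSummand k v τ := by
    simp [latticeTerm, eisSummand]
  have hE : E hk τ = 1 / 2 * eisensteinSeries (N := 1) 0 k τ := rfl
  rw [latticeSum, tsum_congr hterm, tsum_eisSummand_eq_riemannZeta_mul_eisensteinSeries hk τ, hE]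
  ring

theorem bernoulli_eight : bernoulli 8 = -1 / 30 := by
  have h5 : bernoulli' 5 = 0 := bernoulli'_eq_zero_of_odd (by decide) (by norm_num)
  have h7 : bernoulli' 7 = 0 := bernoulli'_eq_zero_of_odd (by decide) (by norm_num)
  have h6 : bernoulli' 6 = 1 / 42 := by
    rw [bernoulli'_def]
    norm_num [Finset.sum_range_succ, h5, Nat.choose]
  rw [bernoulli_eq_bernoulli'_of_ne_one (by norm_num), bernoulli'_def]
  norm_num [Finset.sum_range_succ, h5, h6, h7, Nat.choose]

theorem riemannZeta_eight : riemannZeta 8 = Real.pi ^ 8 / 9450 := by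
  have h := riemannZeta_two_mul_nat (k := 4) four_ne_zero
  norm_num [bernoulli_eight, Nat.factorial] at h
  rw [h]
  ring

theorem E₈_eq_latticeSum : ⇑E₈ = fun τ : ℍ ↦ 4725 / (Real.pi : ℂ) ^ 8 * latticeSum 0 8 τ := by
  ext τ
  have hpi : (Real.pi : ℂ) ≠ 0 := mod_cast Real.pi_ne_zero
  rw [latticeSum_zero (by norm_num), Nat.cast_ofNat, riemannZeta_eight]
  field_simp
  ring

theorem D_E₈_eq_latticeSum :
    D E₈ = fun τ : ℍ ↦ 18900 * Complex.I / (Real.pi : ℂ) ^ 9 * latticeSum 1 9 τ := by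
  rw [E₈_eq_latticeSum, D_const_mul_latticeSum (by norm_num)]
  ext τ
  field_simp
  rw [Complex.I_sq]
  push_cast
  ring

theorem D_D_E₈_eq_latticeSum :
    D (D E₈) = fun τ : ℍ ↦ -85050 / (Real.pi : ℂ) ^ 10 * latticeSum 2 10 τ := by
  rw [D_E₈_eq_latticeSum, D_const_mul_latticeSum (by norm_num)]
  ext τ
  field_simp
  push_cast
  ring

theorem hasSum_mul_div_pow_ten :
    HasSum (fun v : Fin 2 → ℤ ↦ (v 0 * v 1 : ℂ) / (v 0 * Complex.I + v 1) ^ 10)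
      (latticeSum 1 9 I - Complex.I * latticeSum 2 10 I) := by
  refine ((summable_latticeTerm (by norm_num) I).hasSum.sub
    ((summable_latticeTerm (by norm_num) I).hasSum.mul_left _)).congr_fun fun v ↦ ?_
  obtain rfl | hv := eq_or_ne v 0
  · simp [latticeTerm]
  have hne := intCast_mul_add_intCast_ne_zero hv I.im_pos
  rw [coe_I] at hne
  rw [latticeTerm, latticeTerm, coe_I]
  field_simp
  ring

theorem tsum_mul_div_pow_ten :
    ∑' v : Fin 2 → ℤ, (v 0 * v 1 : ℂ) / (v 0 * Complex.I + v 1) ^ 10 =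
      Complex.I * (Real.pi ^ 10 * E₄ I ^ 3 / 306180 - Real.pi ^ 8 * E₄ I ^ 2 / 18900) := by
  have hpi : (Real.pi : ℂ) ≠ 0 := mod_cast Real.pi_ne_zero
  have h1 : latticeSum 1 9 I = -Complex.I * Real.pi ^ 8 * E₄ I ^ 2 / 9450 := by
    have h := D_E₈_I
    rw [D_E₈_eq_latticeSum] at h
    field_simp at h ⊢
    linear_combination (-Complex.I / 2) * h + 9450 * latticeSum 1 9 I * Complex.I_sq
  have h2 : latticeSum 2 10 I =
      -(Real.pi ^ 8 * E₄ I ^ 2 / 18900 + Real.pi ^ 10 * E₄ I ^ 3 / 306180) := by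
    have h := D_D_E₈_I
    rw [D_D_E₈_eq_latticeSum] at h
    field_simp at h ⊢
    linear_combination -1890 * h
  rw [hasSum_mul_div_pow_ten.tsum_eq, h1, h2]
  ring

end LatticeSums

section QuarterTurn

/-- The rotation `(m, n) ↦ (n, -m)` of `ℤ²`; its four powers carry the open first quadrant to the
four open quadrants. -/
def quarterTurn : (Fin 2 → ℤ) ≃ (Fin 2 → ℤ) where
  toFun v := ![v 1, -v 0]
  invFun v := ![-v 1, v 0]
  left_inv v := by ext i; fin_cases i <;> simp
  right_inv v := by ext i; fin_cases i <;> simp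

theorem quarterTurn_apply (v : Fin 2 → ℤ) : quarterTurn v = ![v 1, -v 0] := rfl

variable {E : Type*} [AddCommGroup E] {f : (Fin 2 → ℤ) → E}

theorem sum_indicator_quarterTurn (hturn : ∀ v, f (quarterTurn v) = f v)
    (hzero : ∀ v, v 0 = 0 ∨ v 1 = 0 → f v = 0) (v : Fin 2 → ℤ) :
    ∑ i ∈ Finset.range 4, {v | 0 < v 0 ∧ 0 < v 1}.indicator f (quarterTurn^[i] v) = f v := by
  have h (w : Fin 2 → ℤ) : quarterTurn w 0 = w 1 ∧ quarterTurn w 1 = -w 0 := ⟨rfl, rfl⟩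
  simp only [Finset.sum_range_succ, Finset.sum_range_zero, Function.iterate_succ_apply',
    Function.iterate_zero, id, Set.indicator, Set.mem_ofPred_eq, hturn, h]
  rcases lt_trichotomy (v 0) 0 with h0 | h0 | h0 <;>
    rcases lt_trichotomy (v 1) 0 with h1 | h1 | h1 <;>
    simp [h0, h1, h0.le.not_gt, h1.le.not_gt, hzero]

theorem tsum_indicator_quadrant [TopologicalSpace E] (hzero : ∀ v, v 0 = 0 ∨ v 1 = 0 → f v = 0) :
    ∑' v, {v | 0 < v 0 ∧ 0 < v 1}.indicator f v = ∑' p : ℕ × ℕ, f ![p.1, p.2] := by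
  have hinj : Function.Injective fun p : ℕ × ℕ ↦ (![p.1, p.2] : Fin 2 → ℤ) := fun p q h ↦ by
    simpa [Prod.ext_iff] using h
  rw [← hinj.tsum_eq]
  · refine tsum_congr fun p ↦ ?_
    rw [Set.indicator_apply_eq_self]
    intro hp
    apply hzero
    simp only [Set.mem_ofPred_eq, Matrix.cons_val_zero, Matrix.cons_val_one] at hp ⊢
    lia
  · intro v hv
    obtain ⟨h0, h1⟩ := Set.mem_of_indicator_ne_zero hv
    exact ⟨((v 0).toNat, (v 1).toNat), by ext i; fin_cases i <;> simp [h0.le, h1.le]⟩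

theorem tsum_eq_four_nsmul_tsum_nat [UniformSpace E] [IsUniformAddGroup E] [CompleteSpace E]
    [T2Space E] (hf : Summable f) (hturn : ∀ v, f (quarterTurn v) = f v)
    (hzero : ∀ v, v 0 = 0 ∨ v 1 = 0 → f v = 0) :
    ∑' v, f v = 4 • ∑' p : ℕ × ℕ, f ![p.1, p.2] := by
  set g := {v : Fin 2 → ℤ | 0 < v 0 ∧ 0 < v 1}.indicator f
  have hturns (i : ℕ) : ∑' v, g (quarterTurn^[i] v) = ∑' v, g v := by
    rw [← Equiv.Perm.coe_pow]
    exact (quarterTurn ^ i : Equiv.Perm _).tsum_eq g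
  calc ∑' v, f v = ∑' v, ∑ i ∈ Finset.range 4, g (quarterTurn^[i] v) :=
        tsum_congr fun v ↦ (sum_indicator_quarterTurn hturn hzero v).symm
    _ = ∑ i ∈ Finset.range 4, ∑' v, g (quarterTurn^[i] v) :=
        Summable.tsum_finsetSum fun i _ ↦
          (hf.indicator _).comp_injective (quarterTurn.injective.iterate i)
    _ = 4 • ∑' p : ℕ × ℕ, f ![p.1, p.2] := by
        rw [Finset.sum_congr rfl fun i _ ↦ hturns i, Finset.sum_const, Finset.card_range,
          tsum_indicator_quadrant hzero]

theorem tsum_mul_div_pow_ten_eq_tsum_nat :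
    ∑' v : Fin 2 → ℤ, (v 0 * v 1 : ℂ) / (v 0 * Complex.I + v 1) ^ 10 =
      4 * ∑' p : ℕ × ℕ, (p.1 * p.2 : ℂ) / (p.1 * Complex.I + p.2) ^ 10 := by
  have hI10 : Complex.I ^ 10 = -1 := by rw [Complex.I_pow_eq_pow_mod, Complex.I_sq]
  rw [tsum_eq_four_nsmul_tsum_nat hasSum_mul_div_pow_ten.summable]
  · simp [nsmul_eq_mul]
  · intro v
    have hv : (v 1 : ℂ) * Complex.I + -v 0 = Complex.I * (v 0 * Complex.I + v 1) := by
      linear_combination -(v 0 : ℂ) * Complex.I_sq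
    simp only [quarterTurn_apply, Matrix.cons_val_zero, Matrix.cons_val_one, Int.cast_neg]
    rw [hv, mul_pow, hI10, neg_one_mul, div_neg]
    ring
  · rintro v (hv | hv) <;> simp [hv]

end QuarterTurn

section IntegralExpansion
open MeasureTheory Filter Complex
open ModularForm (E₄)
open scoped Topology Nat

theorem norm_pow_mul_cexp_neg_mul (n : ℕ) (c : ℂ) {x : ℝ} (hx : 0 < x) :
    ‖(x : ℂ) ^ n * cexp (-(c * x))‖ = x ^ n * Real.exp (-(c.re * x)) := by
  rw [norm_mul, norm_pow, norm_real, Real.norm_of_nonneg hx.le, norm_exp, neg_re, re_mul_ofReal]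

theorem integrableOn_pow_mul_cexp_neg_mul (n : ℕ) {c : ℂ} (hc : 0 < c.re) :
    IntegrableOn (fun x : ℝ ↦ (x : ℂ) ^ n * cexp (-(c * x))) (Set.Ioi 0) := by
  have hreal := integrableOn_rpow_mul_exp_neg_mul_rpow (p := 1) (s := n)
    (neg_one_lt_zero.trans_le n.cast_nonneg) one_pos hc
  refine hreal.mono' (by fun_prop) ?_
  filter_upwards [ae_restrict_mem measurableSet_Ioi] with x hx
  rw [norm_pow_mul_cexp_neg_mul n c hx, Real.rpow_natCast, Real.rpow_one, neg_mul]

theorem tendsto_pow_mul_cexp_neg_mul_atTop (n : ℕ) {c : ℂ} (hc : 0 < c.re) :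
    Tendsto (fun x : ℝ ↦ (x : ℂ) ^ n * cexp (-(c * x))) atTop (𝓝 0) := by
  rw [tendsto_zero_iff_norm_tendsto_zero]
  refine (isLittleO_exp_neg_mul_rpow_atTop hc (-n)).tendsto_div_nhds_zero.congr' ?_
  filter_upwards [eventually_gt_atTop 0] with x hx
  rw [norm_pow_mul_cexp_neg_mul n c hx, Real.rpow_neg hx.le, Real.rpow_natCast, neg_mul,
    div_inv_eq_mul, mul_comm]

theorem integral_pow_mul_cexp_neg_mul (n : ℕ) {c : ℂ} (hc : 0 < c.re) :
    ∫ x : ℝ in Set.Ioi 0, (x : ℂ) ^ n * cexp (-(c * x)) = n ! / c ^ (n + 1) := by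
  have hc0 : c ≠ 0 := fun h ↦ hc.ne' (by rw [h, zero_re])
  induction n with
  | zero =>
    simpa [neg_mul, neg_div_neg_eq] using integral_exp_mul_complex_Ioi (a := -c) (by simpa) 0
  | succ n ih =>
    have hderiv (x : ℝ) : HasDerivAt (fun x : ℝ ↦ (x : ℂ) ^ (n + 1) * cexp (-(c * x)))
        ((n + 1) * ((x : ℂ) ^ n * cexp (-(c * x))) -
          c * ((x : ℂ) ^ (n + 1) * cexp (-(c * x)))) x := by
      have hexp := ((hasDerivAt_id (x : ℂ)).const_mul c).neg.cexp
      refine ((hasDerivAt_pow (n + 1) (x : ℂ)).mul hexp).comp_ofReal.congr_deriv ?_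
      simp only [Nat.add_sub_cancel, Nat.cast_add, Nat.cast_one, Pi.neg_apply, id]
      ring
    have hint := (integrableOn_pow_mul_cexp_neg_mul n hc).const_mul (n + 1 : ℂ)
    have hint' := (integrableOn_pow_mul_cexp_neg_mul (n + 1) hc).const_mul c
    have hparts := integral_Ioi_of_hasDerivAt_of_tendsto' (a := 0) (fun x _ ↦ hderiv x)
      (hint.sub hint') (tendsto_pow_mul_cexp_neg_mul_atTop (n + 1) hc)
    rw [integral_sub hint hint', integral_const_mul, integral_const_mul, ih, ofReal_zero,
      zero_pow n.succ_ne_zero, zero_mul, sub_zero] at hparts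
    rw [Nat.factorial_succ, Nat.cast_mul, pow_succ c]
    field_simp at hparts ⊢
    push_cast
    linear_combination -hparts

theorem integral_norm_pow_mul_cexp_neg_mul (n : ℕ) {c : ℂ} (hc : 0 < c.re) :
    ∫ x : ℝ in Set.Ioi 0, ‖(x : ℂ) ^ n * cexp (-(c * x))‖ = n ! / c.re ^ (n + 1) := by
  rw [setIntegral_congr_fun measurableSet_Ioi fun x hx ↦ norm_pow_mul_cexp_neg_mul n c hx]
  exact_mod_cast (integral_pow_mul_cexp_neg_mul n (c := c.re) hc)

/-- The exponent of the `p`-th exponential in the expansion of `(cos x - cosh x)⁻²`. -/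
noncomputable def rate (p : ℕ × ℕ) : ℂ := (1 + I) * p.1 + (1 - I) * p.2

theorem rate_re (p : ℕ × ℕ) : (rate p).re = p.1 + p.2 := by simp [rate]

theorem rate_eq (p : ℕ × ℕ) : rate p = (1 - I) * (p.1 * I + p.2) := by
  rw [rate]
  linear_combination (p.1 : ℂ) * I_sq

theorem one_sub_cexp_mul_one_sub_cexp (x : ℂ) :
    (1 - cexp (-((1 + I) * x))) * (1 - cexp (-((1 - I) * x))) =
      2 * cexp (-x) * (cosh x - cos x) := by
  have h1 : cexp (-((1 + I) * x)) = cexp (-x) * cexp (-x * I) := by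
    rw [← exp_add]; ring_nf
  have h2 : cexp (-((1 - I) * x)) = cexp (-x) * cexp (x * I) := by
    rw [← exp_add]; ring_nf
  have h3 : cexp (-x) * cexp x = 1 := by rw [← exp_add, neg_add_cancel, exp_zero]
  have h4 : cexp (-x * I) * cexp (x * I) = 1 := by
    rw [← exp_add, neg_mul, neg_add_cancel, exp_zero]
  rw [h1, h2, cosh, cos]
  linear_combination cexp (-x) ^ 2 * h4 - h3

theorem norm_cexp_neg_mul_lt_one {c : ℂ} (hc : 0 < c.re) {x : ℝ} (hx : 0 < x) :
    ‖cexp (-(c * x))‖ < 1 := by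
  rw [norm_exp, neg_re, re_mul_ofReal, Real.exp_lt_one_iff, neg_neg_iff_pos]
  positivity

theorem tsum_mul_cexp_neg_rate_mul {x : ℝ} (hx : 0 < x) :
    ∑' p : ℕ × ℕ, (4 * p.1 * p.2 : ℂ) * cexp (-(rate p * x)) = 1 / (cos x - cosh x) ^ 2 := by
  set a := cexp (-((1 + I) * x))
  set b := cexp (-((1 - I) * x))
  have ha := hasSum_coe_mul_geometric_of_norm_lt_one
    (norm_cexp_neg_mul_lt_one (c := 1 + I) (by simp) hx)
  have hb := hasSum_coe_mul_geometric_of_norm_lt_one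
    (norm_cexp_neg_mul_lt_one (c := 1 - I) (by simp) hx)
  have hterm (p : ℕ × ℕ) : (4 * p.1 * p.2 : ℂ) * cexp (-(rate p * x)) =
      4 * ((p.1 * a ^ p.1) * (p.2 * b ^ p.2)) := by
    rw [← exp_nat_mul, ← exp_nat_mul, mul_mul_mul_comm, ← exp_add, rate]
    ring_nf
  have hab : a * b = cexp (-x) ^ 2 := by
    rw [← exp_add, ← exp_nat_mul]
    ring_nf
  have hexp : cexp (-x) ≠ 0 := exp_ne_zero _
  rw [tsum_congr hterm, tsum_mul_left, ← tsum_mul_tsum_of_summable_norm ha.summable.norm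
    hb.summable.norm, ha.tsum_eq, hb.tsum_eq, div_mul_div_comm, ← mul_pow,
    one_sub_cexp_mul_one_sub_cexp, hab, ← neg_sub (cos (x : ℂ))]
  field_simp
  norm_num

theorem rate_re_pos {p : ℕ × ℕ} (hp : p ≠ 0) : 0 < (rate p).re := by
  rw [rate_re]
  norm_cast
  contrapose! hp
  exact Prod.ext (by simp; lia) (by simp; lia)

theorem summable_mul_div_add_pow {k : ℕ} (hk : 4 ≤ k) :
    Summable fun p : ℕ × ℕ ↦ (p.1 * p.2 : ℝ) / (p.1 + p.2) ^ (k + 1) := by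
  have hinj : Function.Injective fun p : ℕ × ℕ ↦ (![p.1, p.2] : Fin 2 → ℤ) := fun p q h ↦ by
    simpa [Prod.ext_iff] using h
  refine .of_nonneg_of_le (fun p ↦ by positivity) (fun p ↦ ?_)
    ((EisensteinSeries.summable_norm_eisSummand (k := (k - 1 : ℕ)) (by lia)
      UpperHalfPlane.I).comp_injective hinj)
  obtain rfl | hp := eq_or_ne p 0
  · simp
  have hadd : (0 : ℝ) < p.1 + p.2 := rate_re p ▸ rate_re_pos hp
  have hne := intCast_mul_add_intCast_ne_zero (v := ![p.1, p.2])
    (fun h ↦ hp (by simpa [Prod.ext_iff] using h)) UpperHalfPlane.I.im_pos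
  have hnorm : ‖(p.1 * I + p.2 : ℂ)‖ ≤ p.1 + p.2 := by
    simpa using norm_add_le (p.1 * I : ℂ) p.2
  calc (p.1 * p.2 : ℝ) / (p.1 + p.2) ^ (k + 1)
      ≤ (p.1 + p.2) ^ 2 / (p.1 + p.2) ^ (k + 1) := by
        gcongr
        nlinarith [sq_nonneg (p.1 - p.2 : ℝ)]
    _ = ((p.1 + p.2 : ℝ) ^ (k - 1))⁻¹ := by
        rw [show k + 1 = (k - 1) + 2 by lia, pow_add]
        field_simp
    _ ≤ (‖(p.1 * I + p.2 : ℂ)‖ ^ (k - 1))⁻¹ := by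
        gcongr
    _ = _ := by simp [EisensteinSeries.eisSummand]

theorem integrableOn_mul_pow_mul_cexp_rate (k : ℕ) (p : ℕ × ℕ) :
    IntegrableOn (fun x : ℝ ↦ (4 * p.1 * p.2 : ℂ) * (x ^ k * cexp (-(rate p * x))))
      (Set.Ioi 0) := by
  obtain rfl | hp := eq_or_ne p 0
  · simp
  · exact (integrableOn_pow_mul_cexp_neg_mul k (rate_re_pos hp)).const_mul _

theorem integral_mul_pow_mul_cexp_rate (k : ℕ) (p : ℕ × ℕ) :
    ∫ x : ℝ in Set.Ioi 0, (4 * p.1 * p.2 : ℂ) * (x ^ k * cexp (-(rate p * x))) =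
      4 * k ! * ((p.1 * p.2 : ℂ) / rate p ^ (k + 1)) := by
  obtain rfl | hp := eq_or_ne p 0
  · simp
  · rw [integral_const_mul, integral_pow_mul_cexp_neg_mul k (rate_re_pos hp)]
    ring

theorem integral_norm_mul_pow_mul_cexp_rate (k : ℕ) (p : ℕ × ℕ) :
    ∫ x : ℝ in Set.Ioi 0, ‖(4 * p.1 * p.2 : ℂ) * (x ^ k * cexp (-(rate p * x)))‖ =
      4 * k ! * ((p.1 * p.2 : ℝ) / (p.1 + p.2) ^ (k + 1)) := by
  obtain rfl | hp := eq_or_ne p 0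
  · simp
  · simp_rw [norm_mul (4 * p.1 * p.2 : ℂ)]
    rw [integral_const_mul, integral_norm_pow_mul_cexp_neg_mul k (rate_re_pos hp), rate_re]
    simp only [norm_mul, norm_natCast, norm_ofNat]
    ring

theorem integral_pow_div_cos_sub_cosh_sq {k : ℕ} (hk : 4 ≤ k) :
    ((∫ x in Set.Ioi (0 : ℝ), x ^ k / (Real.cos x - Real.cosh x) ^ 2 : ℝ) : ℂ) =
      4 * k ! * ∑' p : ℕ × ℕ, (p.1 * p.2 : ℂ) / rate p ^ (k + 1) := by
  have hswap := (hasSum_integral_of_summable_integral_norm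
    (integrableOn_mul_pow_mul_cexp_rate k) (by
      simpa only [integral_norm_mul_pow_mul_cexp_rate] using
        (summable_mul_div_add_pow hk).mul_left (4 * k ! : ℝ))).tsum_eq
  simp_rw [integral_mul_pow_mul_cexp_rate] at hswap
  rw [← tsum_mul_left, hswap, ← integral_complex_ofReal]
  refine setIntegral_congr_fun measurableSet_Ioi fun x hx ↦ ?_
  have hterm (p : ℕ × ℕ) : (4 * p.1 * p.2 : ℂ) * (x ^ k * cexp (-(rate p * x))) =
      x ^ k * ((4 * p.1 * p.2 : ℂ) * cexp (-(rate p * x))) := by ring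
  rw [tsum_congr hterm, tsum_mul_left, tsum_mul_cexp_neg_rate_mul hx]
  push_cast
  ring

theorem integral_pow_nine_div_cos_sub_cosh_sq :
    ((∫ x in Set.Ioi (0 : ℝ), x ^ 9 / (Real.cos x - Real.cosh x) ^ 2 : ℝ) : ℂ) =
      3 / 5 * Real.pi ^ 8 * E₄ UpperHalfPlane.I ^ 2 -
        Real.pi ^ 10 * E₄ UpperHalfPlane.I ^ 3 / 27 := by
  have hsq : (1 - I) ^ 2 = -2 * I := by linear_combination I_sq
  have hpow : (1 - I) ^ 10 = -32 * I := by
    rw [show 10 = 2 * 5 by norm_num, pow_mul, hsq, mul_pow, I_pow_eq_pow_mod]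
    norm_num
  have hterm (p : ℕ × ℕ) : (p.1 * p.2 : ℂ) / rate p ^ (9 + 1) =
      I / 32 * ((p.1 * p.2 : ℂ) / (p.1 * I + p.2) ^ 10) := by
    rw [rate_eq, mul_pow, hpow, ← div_div]
    have hinv : (-32 * I)⁻¹ = I / 32 := by
      rw [mul_inv, inv_I]
      ring
    rw [div_eq_mul_inv _ (-32 * I), hinv]
    ring
  have hsum := tsum_mul_div_pow_ten_eq_tsum_nat.symm.trans tsum_mul_div_pow_ten
  rw [integral_pow_div_cos_sub_cosh_sq (by norm_num), tsum_congr hterm, tsum_mul_left]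
  rw [show 9 ! = 362880 from rfl]
  push_cast
  linear_combination 11340 * I * hsum + (1 / 27 * Real.pi ^ 10 * E₄ UpperHalfPlane.I ^ 3 -
    3 / 5 * Real.pi ^ 8 * E₄ UpperHalfPlane.I ^ 2) * I_sq

end IntegralExpansion

section WeierstrassP
open PeriodPair Filter ComplexConjugate
open scoped Topology

variable (L : PeriodPair)

variable {L} in
theorem hasDerivAt_weierstrassP {z : ℂ} (hz : z ∉ L.lattice) : HasDerivAt ℘[L] (℘'[L] z) z :=
  deriv_weierstrassP (L := L) ▸ (L.analyticOnNhd_weierstrassP z hz).differentiableAt.hasDerivAt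

theorem isPreconnected_compl_lattice : IsPreconnected (L.lattice : Set ℂ)ᶜ := by
  have hcount : Countable L.lattice := L.latticeEquivProd.injective.countable
  exact ((Set.countable_coe_iff.mp hcount).isConnected_compl_of_one_lt_rank
    (by simp [Complex.rank_real_complex])).isPreconnected

theorem exists_derivWeierstrassP_ne_zero : ∃ z ∉ L.lattice, ℘'[L] z ≠ 0 := by
  by_contra! hzero
  obtain ⟨c, hc⟩ := L.isClosed_lattice.isOpen_compl.exists_is_const_of_deriv_eq_zero
    (isPreconnected_compl_lattice L) L.differentiableOn_weierstrassP fun z hz ↦ by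
      rw [deriv_weierstrassP, hzero z hz, Pi.zero_apply]
  have hpole : Tendsto ℘[L] (𝓝[≠] 0) (Bornology.cobounded ℂ) :=
    tendsto_cobounded_of_meromorphicOrderAt_neg <| by
      rw [L.order_weierstrassP 0 L.lattice.zero_mem]
      decide
  have hconst : ℘[L] =ᶠ[𝓝[≠] 0] fun _ ↦ c := by
    filter_upwards [nhdsWithin_le_nhds (L.compl_lattice_sdiff_singleton_mem_nhds 0),
      self_mem_nhdsWithin] with z hz hz0
    exact hc z fun hmem ↦ hz ⟨hmem, hz0⟩
  exact hpole.not_tendsto (Metric.disjoint_cobounded_nhds c)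
    (tendsto_const_nhds.congr' hconst.symm)

variable {L} in
theorem deriv_derivWeierstrassP {z : ℂ} (hz : z ∉ L.lattice) :
    deriv ℘'[L] z = 6 * ℘[L] z ^ 2 - L.g₂ / 2 := by
  have hP := L.analyticOnNhd_weierstrassP
  have hP' := L.analyticOnNhd_derivWeierstrassP
  have hdefect : AnalyticOnNhd ℂ (fun z ↦ deriv ℘'[L] z - (6 * ℘[L] z ^ 2 - L.g₂ / 2))
      (L.lattice : Set ℂ)ᶜ := fun w hw ↦ by
    have h := hP w hw
    have h' := hP'.deriv w hw
    fun_prop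
  have hmul (w : ℂ) (hw : w ∈ (L.lattice : Set ℂ)ᶜ) :
      ℘'[L] w * (deriv ℘'[L] w - (6 * ℘[L] w ^ 2 - L.g₂ / 2)) = 0 := by
    have hsq := (hP' w hw).differentiableAt.hasDerivAt.fun_pow 2
    have hcubic := ((((hasDerivAt_weierstrassP hw).fun_pow 3).const_mul 4).sub
      ((hasDerivAt_weierstrassP hw).const_mul L.g₂)).sub_const L.g₃
    have heq : (fun y ↦ ℘'[L] y ^ 2) =ᶠ[𝓝 w]
        fun y ↦ 4 * ℘[L] y ^ 3 - L.g₂ * ℘[L] y - L.g₃ := by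
      filter_upwards [L.isClosed_lattice.isOpen_compl.mem_nhds hw] with y hy
      exact L.derivWeierstrassP_sq y hy
    have h := hsq.unique (hcubic.congr_of_eventuallyEq heq)
    push_cast at h
    linear_combination h / 2
  obtain ⟨w, hw, hne⟩ := exists_derivWeierstrassP_ne_zero L
  obtain h | h := hP'.eq_zero_or_eq_zero_of_mul_eq_zero hdefect hmul
    (isPreconnected_compl_lattice L)
  · exact absurd (h w hw) hne
  · exact sub_eq_zero.mp (h z hz)

theorem tendsto_re_weierstrassP_nhdsGT_zero :
    Tendsto (fun x : ℝ ↦ (℘[L] x).re) (𝓝[>] 0) atTop := by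
  have hsplit (x : ℝ) : (℘[L] x).re = (weierstrassPExcept L 0 x).re + (x ^ 2)⁻¹ := by
    have h := L.weierstrassPExcept_add 0 x
    simp only [ZeroMemClass.coe_zero, sub_zero, ne_eq, OfNat.ofNat_ne_zero, not_false_eq_true,
      zero_pow, div_zero] at h
    rw [← h, Complex.add_re, one_div]
    norm_cast
  have hcont : ContinuousAt (fun x : ℝ ↦ (weierstrassPExcept L 0 x).re) 0 :=
    Complex.continuous_re.continuousAt.comp (ContinuousAt.comp (g := weierstrassPExcept L 0)
      (by simpa using (L.analyticAt_weierstrassPExcept 0).continuousAt)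
      Complex.continuous_ofReal.continuousAt)
  have hpow : Tendsto (fun x : ℝ ↦ (x ^ 2)⁻¹) (𝓝[>] 0) atTop := by
    simp_rw [← inv_pow]
    exact (tendsto_pow_atTop two_ne_zero).comp tendsto_inv_nhdsGT_zero
  simp_rw [hsplit]
  exact (hcont.tendsto.mono_left nhdsWithin_le_nhds).add_atTop hpow

theorem derivWeierstrassP_half (l : L.lattice) : ℘'[L] (l / 2) = 0 := by
  have h := L.derivWeierstrassP_add_coe (-(l / 2)) l
  rw [show -(l / 2 : ℂ) + l = l / 2 by ring, L.derivWeierstrassP_neg] at h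
  exact self_eq_neg.mp h

/-- Complex conjugation as a permutation of a conjugation-invariant lattice. -/
noncomputable def latticeConj (hL : ∀ z ∈ L.lattice, conj z ∈ L.lattice) : L.lattice ≃ L.lattice :=
  (star_involutive (R := ℂ)).toPerm.subtypeEquiv fun z ↦ ⟨hL z, fun h ↦ by simpa using hL _ h⟩

variable {L} in
theorem conj_weierstrassP (hL : ∀ z ∈ L.lattice, conj z ∈ L.lattice) (x : ℝ) :
    conj (℘[L] x) = ℘[L] x := by
  rw [weierstrassP, Complex.conj_tsum, ← (latticeConj L hL).tsum_eq]
  simp [latticeConj]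

variable {L} in
theorem conj_derivWeierstrassP (hL : ∀ z ∈ L.lattice, conj z ∈ L.lattice) (x : ℝ) :
    conj (℘'[L] x) = ℘'[L] x := by
  rw [derivWeierstrassP, map_neg, Complex.conj_tsum, ← (latticeConj L hL).tsum_eq]
  simp [latticeConj, Complex.conj_ofNat]

end WeierstrassP

section LemniscaticEquation
open Filter Set MeasureTheory
open scoped Topology

/-- `p` is a real solution on `(0, ω]` of the differential equation `p'² = 4p³ - 4a²p` of the
Weierstrass function with `g₂ = 4a²`, `g₃ = 0`; it has its pole at `0` and its minimum at the
half-period `ω`. The derivative `p'` is an explicit argument, and the differentiated equation is a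
separate field because the first-order equation alone also admits the constant solution `a`. -/
structure IsLemniscatic (p p' : ℝ → ℝ) (a ω : ℝ) : Prop where
  parameter_pos : 0 < a
  halfPeriod_pos : 0 < ω
  hasDerivAt : ∀ x ∈ Ioc 0 ω, HasDerivAt p (p' x) x
  hasDerivAt_deriv : ∀ x ∈ Ioc 0 ω, HasDerivAt p' (6 * p x ^ 2 - 2 * a ^ 2) x
  deriv_sq : ∀ x ∈ Ioc 0 ω, p' x ^ 2 = 4 * p x ^ 3 - 4 * a ^ 2 * p x
  tendsto_atTop : Tendsto p (𝓝[>] 0) atTop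
  deriv_halfPeriod : p' ω = 0

namespace IsLemniscatic

variable {p p' : ℝ → ℝ} {a ω : ℝ} (h : IsLemniscatic p p' a ω)
include h

theorem continuousOn : ContinuousOn p (Ioc 0 ω) := fun x hx ↦
  (h.hasDerivAt x hx).continuousAt.continuousWithinAt

-- The cubic is negative on `(0, a)`, so `p` cannot cross the value `a / 2`.
theorem parameter_le_apply {x : ℝ} (hx : x ∈ Ioc 0 ω) : a ≤ p x := by
  have ha := h.parameter_pos
  by_contra! hlt
  have hnonpos : p x ≤ 0 := by
    by_contra! hpos
    have hcubic : p x * (a ^ 2 - p x ^ 2) ≤ 0 := by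
      linarith [h.deriv_sq x hx, sq_nonneg (p' x)]
    have hsq : p x ^ 2 < a ^ 2 := by gcongr
    exact hcubic.not_gt (mul_pos hpos (sub_pos.mpr hsq))
  obtain ⟨x₁, hx₁a, hx₁⟩ := ((h.tendsto_atTop.eventually_gt_atTop a).and
    (Ioc_mem_nhdsGT h.halfPeriod_pos)).exists
  obtain ⟨y, hy, hya⟩ : a / 2 ∈ p '' Ioc 0 ω :=
    (isPreconnected_Ioc.image p h.continuousOn).ordConnected.out (mem_image_of_mem p hx)
      (mem_image_of_mem p hx₁) ⟨by linarith, by linarith⟩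
  have hode := h.deriv_sq y hy
  rw [hya] at hode
  nlinarith [sq_nonneg (p' y), pow_pos ha 3]

theorem apply_pos {x : ℝ} (hx : x ∈ Ioc 0 ω) : 0 < p x :=
  h.parameter_pos.trans_le (h.parameter_le_apply hx)

theorem strictMonoOn_deriv : StrictMonoOn p' (Ioc 0 ω) := by
  refine strictMonoOn_of_deriv_pos (convex_Ioc _ _)
    (fun x hx ↦ (h.hasDerivAt_deriv x hx).continuousAt.continuousWithinAt) fun x hx ↦ ?_
  replace hx := interior_subset hx
  rw [(h.hasDerivAt_deriv x hx).deriv]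
  nlinarith [h.parameter_le_apply hx, h.parameter_pos]

theorem deriv_neg {x : ℝ} (hx : x ∈ Ioo 0 ω) : p' x < 0 :=
  h.deriv_halfPeriod ▸
    h.strictMonoOn_deriv (Ioo_subset_Ioc_self hx) ⟨h.halfPeriod_pos, le_rfl⟩ hx.2

theorem parameter_lt_apply {x : ℝ} (hx : x ∈ Ioo 0 ω) : a < p x := by
  refine (h.parameter_le_apply (Ioo_subset_Ioc_self hx)).lt_of_ne fun heq ↦ (h.deriv_neg hx).ne ?_
  have hode := h.deriv_sq x (Ioo_subset_Ioc_self hx)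
  rw [← heq] at hode
  exact pow_eq_zero_iff two_ne_zero |>.mp (by linear_combination hode)

theorem apply_halfPeriod : p ω = a := by
  have hω : ω ∈ Ioc 0 ω := ⟨h.halfPeriod_pos, le_rfl⟩
  have ha := h.parameter_pos
  have hp := h.apply_pos hω
  have hode := h.deriv_sq ω hω
  rw [h.deriv_halfPeriod] at hode
  refine sub_eq_zero.mp <| (mul_eq_zero_iff_left (by positivity : p ω * (p ω + a) ≠ 0)).mp ?_
  linear_combination -hode / 4

theorem hasDerivAt_sq_div {x : ℝ} (hx : x ∈ Ioc 0 ω) :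
    HasDerivAt (fun y ↦ (a / p y) ^ 2) (2 * a ^ 2 * -p' x / p x ^ 3) x := by
  have hp := (h.apply_pos hx).ne'
  refine (((h.hasDerivAt x hx).fun_inv hp).const_mul a |>.fun_pow 2).congr_deriv ?_
  simp only [Nat.cast_ofNat, Nat.add_one_sub_one, pow_one]
  field_simp

theorem deriv_sq_div_pos {x : ℝ} (hx : x ∈ Ioo 0 ω) : 0 < 2 * a ^ 2 * -p' x / p x ^ 3 := by
  have ha := h.parameter_pos
  have hp := h.apply_pos (Ioo_subset_Ioc_self hx)
  have hp' := neg_pos.mpr (h.deriv_neg hx)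
  positivity

theorem injOn_sq_div : InjOn (fun x ↦ (a / p x) ^ 2) (Ioo 0 ω) := by
  refine (strictMonoOn_of_deriv_pos (convex_Ioo _ _) (fun x hx ↦
    (h.hasDerivAt_sq_div (Ioo_subset_Ioc_self hx)).continuousAt.continuousWithinAt)
    fun x hx ↦ ?_).injOn
  rw [interior_Ioo] at hx
  rw [(h.hasDerivAt_sq_div (Ioo_subset_Ioc_self hx)).deriv]
  exact h.deriv_sq_div_pos hx

theorem image_sq_div : (fun x ↦ (a / p x) ^ 2) '' Ioo 0 ω = Ioo 0 1 := by
  have ha := h.parameter_pos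
  have hω := h.halfPeriod_pos
  refine Subset.antisymm ?_ ?_
  · rintro _ ⟨x, hx, rfl⟩
    have hp := h.apply_pos (Ioo_subset_Ioc_self hx)
    have hlt : a / p x < 1 := (div_lt_one hp).mpr (h.parameter_lt_apply hx)
    exact ⟨by positivity, pow_lt_one₀ (by positivity) hlt two_ne_zero⟩
  · have hzero : Tendsto (fun x ↦ (a / p x) ^ 2) (𝓝[>] 0) (𝓝 0) := by
      simpa using (h.tendsto_atTop.const_div_atTop a).pow 2
    have hone : Tendsto (fun x ↦ (a / p x) ^ 2) (𝓝[<] ω) (𝓝 1) := by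
      have hcont := (h.hasDerivAt_sq_div ⟨hω, le_rfl⟩).continuousAt.tendsto
      rw [h.apply_halfPeriod, div_self ha.ne', one_pow] at hcont
      exact hcont.mono_left nhdsWithin_le_nhds
    exact isPreconnected_Ioo.intermediate_value_Ioo
      (le_principal_iff.mpr (Ioo_mem_nhdsGT hω)) (le_principal_iff.mpr (Ioo_mem_nhdsLT hω))
      (fun x hx ↦ (h.hasDerivAt_sq_div (Ioo_subset_Ioc_self hx)).continuousAt.continuousWithinAt)
      hzero hone

theorem neg_deriv_eq {x : ℝ} (hx : x ∈ Ioo 0 ω) :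
    -p' x = 2 * √(p x) ^ 3 * √(1 - (a / p x) ^ 2) := by
  have hp := h.apply_pos (Ioo_subset_Ioc_self hx)
  have hlt : (a / p x) ^ 2 < 1 := (h.image_sq_div ▸ mem_image_of_mem _ hx : _ ∈ Ioo (0 : ℝ) 1).2
  refine (pow_left_inj₀ (neg_pos.mpr (h.deriv_neg hx)).le (by positivity) two_ne_zero).mp ?_
  rw [neg_sq, h.deriv_sq x (Ioo_subset_Ioc_self hx), mul_pow, Real.sq_sqrt (by linarith), mul_pow,
    ← pow_mul, mul_comm 3 2, pow_mul, Real.sq_sqrt hp.le]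
  field_simp
  ring

theorem deriv_sq_div_mul_rpow {x : ℝ} (hx : x ∈ Ioo 0 ω) :
    2 * a ^ 2 * -p' x / p x ^ 3 *
      (((a / p x) ^ 2) ^ (-3 / 4 : ℝ) * (1 - (a / p x) ^ 2) ^ (-1 / 2 : ℝ)) = 4 * √a := by
  have ha := h.parameter_pos
  have hp := h.apply_pos (Ioo_subset_Ioc_self hx)
  have hlt : (a / p x) ^ 2 < 1 := (h.image_sq_div ▸ mem_image_of_mem _ hx : _ ∈ Ioo (0 : ℝ) 1).2
  have hquarter : ((a / p x) ^ 2) ^ (-3 / 4 : ℝ) = (√(p x) / √a) ^ 3 := by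
    rw [← Real.sqrt_div' _ ha.le, Real.sqrt_eq_rpow, ← Real.rpow_natCast, ← Real.rpow_natCast,
      ← Real.rpow_mul (by positivity), ← Real.rpow_mul (by positivity), ← inv_div a,
      Real.inv_rpow (by positivity), ← Real.rpow_neg (by positivity)]
    norm_num
  have hhalf : (1 - (a / p x) ^ 2) ^ (-1 / 2 : ℝ) = (√(1 - (a / p x) ^ 2))⁻¹ := by
    rw [neg_div, Real.rpow_neg (by linarith), ← Real.sqrt_eq_rpow]
  have hroot : √(1 - (a / p x) ^ 2) ≠ 0 := (Real.sqrt_pos.mpr (by linarith)).ne'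
  rw [hquarter, hhalf, h.neg_deriv_eq hx]
  have hsqrt_a : √a ^ 4 = a ^ 2 := by rw [pow_mul _ 2 2, Real.sq_sqrt ha.le]
  have hsqrt_p : √(p x) ^ 6 = p x ^ 3 := by rw [pow_mul _ 2 3, Real.sq_sqrt hp.le]
  generalize √(1 - (a / p x) ^ 2) = w at hroot ⊢
  field_simp
  linear_combination 4 * a ^ 2 * hsqrt_p - 4 * p x ^ 3 * hsqrt_a

-- The substitution `u = (a / p x)²` turns `u^(-3/4) (1 - u)^(-1/2) du` into `4 √a dx`.
theorem integral_rpow_mul_one_sub_rpow :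
    ∫ u in Ioo (0 : ℝ) 1, u ^ (-3 / 4 : ℝ) * (1 - u) ^ (-1 / 2 : ℝ) = 4 * √a * ω := by
  rw [← h.image_sq_div, integral_image_eq_integral_abs_deriv_smul measurableSet_Ioo
    (fun x hx ↦ (h.hasDerivAt_sq_div (Ioo_subset_Ioc_self hx)).hasDerivWithinAt) h.injOn_sq_div,
    setIntegral_congr_fun (g := fun _ ↦ 4 * √a) measurableSet_Ioo fun x hx ↦ by
      rw [abs_of_pos (h.deriv_sq_div_pos hx), smul_eq_mul, h.deriv_sq_div_mul_rpow hx]]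
  simp [h.halfPeriod_pos.le, mul_comm]

end IsLemniscatic

theorem integral_rpow_mul_one_sub_rpow_eq_beta {α β : ℝ} (hα : 0 < α) (hβ : 0 < β) :
    ∫ u in Ioo (0 : ℝ) 1, u ^ (α - 1) * (1 - u) ^ (β - 1) = ProbabilityTheory.beta α β := by
  rw [ProbabilityTheory.beta_eq_betaIntegralReal α β hα hβ, Complex.betaIntegral,
    intervalIntegral.integral_of_le zero_le_one, integral_Ioc_eq_integral_Ioo,
    ← Complex.ofReal_re (∫ u in Ioo (0 : ℝ) 1, _), ← integral_complex_ofReal]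
  congr 1
  refine setIntegral_congr_fun measurableSet_Ioo fun u hu ↦ ?_
  push_cast [Complex.ofReal_cpow hu.1.le, Complex.ofReal_cpow (sub_pos.mpr hu.2).le]
  rfl

theorem beta_quarter_half_sq :
    ProbabilityTheory.beta (1 / 4) (1 / 2) ^ 2 = Real.Gamma (1 / 4) ^ 4 / (2 * Real.pi) := by
  have hreflection := Real.Gamma_mul_Gamma_one_sub (1 / 4)
  rw [mul_one_div, Real.sin_pi_div_four, eq_div_iff (by positivity)] at hreflection
  have : 0 < Real.Gamma (1 - 1 / 4 : ℝ) := Real.Gamma_pos_of_pos (by norm_num)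
  rw [ProbabilityTheory.beta, show (1 / 4 + 1 / 2 : ℝ) = 1 - 1 / 4 by norm_num,
    Real.Gamma_one_half_eq, div_pow, mul_pow, Real.sq_sqrt Real.pi_pos.le,
    div_eq_div_iff (by positivity) (by positivity)]
  have hsq := congrArg (· ^ 2) hreflection
  simp only [mul_pow, div_pow, Real.sq_sqrt zero_le_two] at hsq
  linear_combination (-2 * Real.Gamma (1 / 4) ^ 2) * hsq

theorem IsLemniscatic.parameter_sq {p p' : ℝ → ℝ} {a ω : ℝ} (h : IsLemniscatic p p' a ω) :
    a ^ 2 = Real.Gamma (1 / 4) ^ 8 / (1024 * Real.pi ^ 2 * ω ^ 4) := by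
  have hbeta : ProbabilityTheory.beta (1 / 4) (1 / 2) = 4 * √a * ω := by
    rw [← h.integral_rpow_mul_one_sub_rpow, ← integral_rpow_mul_one_sub_rpow_eq_beta
      (by norm_num) (by norm_num)]
    norm_num
  have hω := h.halfPeriod_pos
  have hsq := beta_quarter_half_sq
  rw [hbeta, mul_pow, mul_pow, Real.sq_sqrt h.parameter_pos.le] at hsq
  have ha : a = Real.Gamma (1 / 4) ^ 4 / (32 * Real.pi * ω ^ 2) := by
    field_simp at hsq ⊢
    linarith
  rw [ha, div_pow]
  ring

end LemniscaticEquation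

section LemniscaticWeierstrassP
open PeriodPair ComplexConjugate

theorem isLemniscatic_weierstrassP {L : PeriodPair} (hconj : ∀ z ∈ L.lattice, conj z ∈ L.lattice)
    (hg₃ : L.g₃ = 0) {a ω : ℝ} (ha : 0 < a) (hg₂ : L.g₂ = ((4 * a ^ 2 : ℝ) : ℂ)) (hω : 0 < ω)
    (hperiod : ((2 * ω : ℝ) : ℂ) ∈ L.lattice) (hlattice : ∀ x ∈ Set.Ioc 0 ω, (x : ℂ) ∉ L.lattice) :
    IsLemniscatic (fun x : ℝ ↦ (℘[L] x).re) (fun x : ℝ ↦ (℘'[L] x).re) a ω := by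
  have hre (x : ℝ) : ((℘[L] x).re : ℂ) = ℘[L] x :=
    Complex.conj_eq_iff_re.mp (conj_weierstrassP hconj x)
  have hre' (x : ℝ) : ((℘'[L] x).re : ℂ) = ℘'[L] x :=
    Complex.conj_eq_iff_re.mp (conj_derivWeierstrassP hconj x)
  refine ⟨ha, hω, fun x hx ↦ (hasDerivAt_weierstrassP (hlattice x hx)).real_of_complex,
    fun x hx ↦ ?_, fun x hx ↦ ?_, tendsto_re_weierstrassP_nhdsGT_zero L, ?_⟩
  · have hderiv : deriv ℘'[L] x = ((6 * (℘[L] x).re ^ 2 - 2 * a ^ 2 : ℝ) : ℂ) := by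
      rw [deriv_derivWeierstrassP (hlattice x hx), hg₂]
      push_cast
      rw [hre]
      ring
    have h := (L.analyticOnNhd_derivWeierstrassP x
      (hlattice x hx)).differentiableAt.hasDerivAt.real_of_complex
    rwa [hderiv, Complex.ofReal_re] at h
  · have h := L.derivWeierstrassP_sq x (hlattice x hx)
    rw [hg₃, hg₂, sub_zero, ← hre, ← hre'] at h
    exact_mod_cast h
  · have h := derivWeierstrassP_half L ⟨_, hperiod⟩
    rw [show (((2 * ω : ℝ) : ℂ) / 2) = ω by push_cast; ring] at h
    exact congrArg Complex.re h

end LemniscaticWeierstrassP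

section SquareLattice
open PeriodPair ComplexConjugate
open ModularForm (E₄)

/-- The periods `1, i` of the square lattice `ℤ[i]`. -/
noncomputable def squarePeriods : PeriodPair :=
  ⟨1, Complex.I, Complex.coe_basisOneI ▸ Complex.basisOneI.linearIndependent⟩

theorem mem_lattice_squarePeriods {z : ℂ} :
    z ∈ squarePeriods.lattice ↔ ∃ m n : ℤ, (m : ℂ) + n * Complex.I = z := by
  simp [mem_lattice, squarePeriods]

theorem conj_mem_lattice_squarePeriods :
    ∀ z ∈ squarePeriods.lattice, conj z ∈ squarePeriods.lattice := fun _ hz ↦ by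
  obtain ⟨m, n, rfl⟩ := mem_lattice_squarePeriods.mp hz
  exact mem_lattice_squarePeriods.mpr ⟨m, -n, by simp⟩

theorem ofReal_notMem_lattice_squarePeriods {x : ℝ} (hx : x ∈ Set.Ioo 0 1) :
    (x : ℂ) ∉ squarePeriods.lattice := fun hmem ↦ by
  obtain ⟨m, n, hmn⟩ := mem_lattice_squarePeriods.mp hmem
  have hm : (m : ℝ) = x := by simpa using congrArg Complex.re hmn
  have hpos : 0 < m := by exact_mod_cast hm ▸ hx.1
  have hlt : m < 1 := by exact_mod_cast hm ▸ hx.2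
  omega

theorem G_squarePeriods (k : ℕ) : squarePeriods.G k = latticeSum 0 k Complex.I := by
  let e : (Fin 2 → ℤ) ≃ squarePeriods.lattice := ((finTwoArrowEquiv ℤ).trans
    (Equiv.prodComm ℤ ℤ)).trans squarePeriods.latticeEquivProd.symm.toEquiv
  have he (v : Fin 2 → ℤ) : (e v : ℂ) = v 0 * Complex.I + v 1 := by
    refine (squarePeriods.latticeEquiv_symm_apply (v 1, v 0)).trans ?_
    simp [squarePeriods, add_comm]
  rw [PeriodPair.G, ← e.tsum_eq, latticeSum]
  simp [he, latticeTerm]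

theorem g₂_squarePeriods :
    squarePeriods.g₂ = 4 / 3 * Real.pi ^ 4 * E₄ UpperHalfPlane.I := by
  rw [PeriodPair.g₂, G_squarePeriods, ← UpperHalfPlane.coe_I, latticeSum_zero (by norm_num)]
  push_cast
  rw [riemannZeta_four]
  ring

theorem g₃_squarePeriods : squarePeriods.g₃ = 0 := by
  rw [PeriodPair.g₃, G_squarePeriods, ← UpperHalfPlane.coe_I, latticeSum_zero (by norm_num), E₆_I]
  simp

theorem exists_pos_E₄_I_eq : ∃ r : ℝ, 0 < r ∧ E₄ UpperHalfPlane.I = r := by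
  have hbernoulli : bernoulli 4 = -1 / 30 := by
    rw [bernoulli_eq_bernoulli'_of_ne_one (by norm_num)]
    norm_num
  have hq : Complex.exp (2 * Real.pi * Complex.I * UpperHalfPlane.I) =
      (Real.exp (-2 * Real.pi) : ℂ) := by
    rw [UpperHalfPlane.coe_I, mul_assoc, Complex.I_mul_I]
    push_cast
    ring_nf
  refine ⟨1 + 240 * ∑' n : ℕ+,
    (ArithmeticFunction.sigma 3 n : ℝ) * Real.exp (-2 * Real.pi) ^ (n : ℕ), by positivity, ?_⟩
  refine (EisensteinSeries.q_expansion_bernoulli (k := 4) (by norm_num) (by decide) _).trans ?_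
  rw [hq, hbernoulli]
  push_cast
  norm_num

theorem E₄_I : E₄ UpperHalfPlane.I =
    ((3 * Real.Gamma (1 / 4) ^ 8 / (64 * Real.pi ^ 6) : ℝ) : ℂ) := by
  obtain ⟨r, hr, hE₄⟩ := exists_pos_E₄_I_eq
  obtain ⟨a, ha, ha_sq⟩ : ∃ a > 0, a ^ 2 = Real.pi ^ 4 * r / 3 :=
    ⟨√(Real.pi ^ 4 * r / 3), by positivity, Real.sq_sqrt (by positivity)⟩
  have hg₂ : squarePeriods.g₂ = ((4 * a ^ 2 : ℝ) : ℂ) := by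
    rw [g₂_squarePeriods, hE₄, ha_sq]
    push_cast
    ring
  have hlemniscatic := isLemniscatic_weierstrassP conj_mem_lattice_squarePeriods g₃_squarePeriods
    ha hg₂ one_half_pos (mem_lattice_squarePeriods.mpr ⟨1, 0, by simp⟩)
    fun x hx ↦ ofReal_notMem_lattice_squarePeriods ⟨hx.1, hx.2.trans_lt one_half_lt_one⟩
  have hparameter := hlemniscatic.parameter_sq
  rw [ha_sq] at hparameter
  rw [hE₄, Complex.ofReal_inj]
  field_simp at hparameter ⊢
  linarith

end SquareLattice

end BerndtIntegral

theorem berndt_integral_x9_minus_sq :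
    ∫ x in Set.Ioi (0 : ℝ), x ^ 9 / (Real.cos x - Real.cosh x) ^ 2
      = 27 * Real.Gamma (1/4) ^ 16 / (5 * 2 ^ 12 * Real.pi ^ 4)
        - Real.Gamma (1/4) ^ 24 / (2 ^ 18 * Real.pi ^ 8) := by
  apply Complex.ofReal_injective
  rw [BerndtIntegral.integral_pow_nine_div_cos_sub_cosh_sq, BerndtIntegral.E₄_I]
  push_cast
  field_simp
  ring
end
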